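/- Let R be a commutative noetherian ring with identity, let a be a proper ideal of R with dim R/a = 2, and let M be a finitely generated R-module. Then the local cohomology module H^i_a(M) is a-cofinite for every i ∈ ℤ if and only if Hom_R(R/a, H^i_a(M)) is a finitely generated R-module for every i ∈ ℤ. -/

import Mathlib

universe u

open CategoryTheory

/-- `Ext^i_R(R/a, M)` as an `R`-module, for `M : ModuleCat R`. -/
noncomputable def extQuot {R : Type u} [CommRing R] (a : Ideal R) (i : ℕ)
    (M : ModuleCat.{u} R) : ModuleCat.{u} R :=
  ((Ext R (ModuleCat.{u} R) i).obj (Opposite.op (ModuleCat.of R (R ⧸ a)))).obj M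

/-- An `R`-module `M` is `a`-cofinite if `Supp M ⊆ V(a)` and `Ext^i_R(R/a, M)` is a
finitely generated `R`-module for every `i ≥ 0`. -/
def IsCofinite {R : Type u} [CommRing R] (a : Ideal R) (M : ModuleCat.{u} R) : Prop :=
  Module.support R M ⊆ PrimeSpectrum.zeroLocus (a : Set R) ∧
    ∀ i : ℕ, Module.Finite R (extQuot a i M)

/-!
Cofiniteness of the local cohomology reduces to one criterion for an `a`-torsion module `F`: if
`dim R/a ≤ 2` and `Ext^i(R/a, F)` is finitely generated for `i ≤ 2`, then it is finitely generated
for all `i`. Given this, `Γ_a(M)` satisfies the criterion because `Ext^2(R/a, Γ_a(M))` is controlled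
by `Hom(R/a, H^1_a(M))`; embedding `M/Γ_a(M)` into an injective module without `a`-torsion produces
a module `M'` with `H^n_a(M') ≅ H^{n+1}_a(M)` whose modules `Ext^n(R/a, M')` are again finitely
generated, and one inducts on the cohomological degree.

The criterion is known for `dim R/a ≤ 1` with the condition `i ≤ 1` only: Melkersson's argument
makes `F` Artinian up to a finitely generated piece. In dimension two, away from a single element
`f` outside the minimal primes of `a` the dimension has dropped, so every `Ext^i(R/a, F)` is
finitely generated up to `f`-power torsion. The `f`-torsion is then controlled by the `f`-adic Tate
module of a suitable extension module: over the `f`-adic completion it is finitely generated by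
Nakayama, and reducing modulo an element of its annihilator shows that a power of `f` kills it, so
that it vanishes.
-/

/-! ### Derived functor Ext and Yoneda Ext -/

section DerivedExt

variable {R : Type*} [CommRing R] {C : Type*} [Category* C] [Abelian C] [Linear R C]

lemma homologyMap_unop_comp_homologyUnop_inv {ι : Type*} {c : ComplexShape ι}
    {K L : HomologicalComplex Cᵒᵖ c} (φ : K ⟶ L) (i : ι) :
    (HomologicalComplex.homologyMap φ i).unop ≫ (HomologicalComplex.homologyUnop K i).inv =
      (HomologicalComplex.homologyUnop L i).inv ≫
        HomologicalComplex.homologyMap ((HomologicalComplex.unopFunctor _ _).map φ.op) i := by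
  have h := congrArg Quiver.Hom.unop (HomologicalComplex.homologyOp_hom_naturality
    ((HomologicalComplex.unopFunctor _ _).map φ.op) i)
  exact (CommSq.mk h : CommSq (HomologicalComplex.homologyUnop L i).hom _
    _ (HomologicalComplex.homologyUnop K i).hom).horiz_inv.w.symm

variable (R) in
/-- The map of cochain complexes `Hom(L, Y) ⟶ Hom(K, Y)` induced by a map of chain
complexes `K ⟶ L`. -/
noncomputable def linearYonedaObjMap {K L : ChainComplex C ℕ} (φ : K ⟶ L) (Y : C) :
    L.linearYonedaObj R Y ⟶ K.linearYonedaObj R Y :=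
  (HomologicalComplex.unopFunctor _ _).map
    ((((linearYoneda R C).obj Y).rightOp.mapHomologicalComplex _).map φ).op

/-- The `n`-cocycle `K.X n ⟶ Y` underlying an element of the `n`-th module of cycles of the
complex `Hom(K, Y)`. -/
noncomputable def cocycleHom {K : ChainComplex C ℕ} {Y : C} {n : ℕ}
    (z : (K.linearYonedaObj R Y).cycles n) : K.X n ⟶ Y :=
  (K.linearYonedaObj R Y).iCycles n z

lemma d_comp_cocycleHom {K : ChainComplex C ℕ} {Y : C} {n : ℕ}
    (z : (K.linearYonedaObj R Y).cycles n) : K.d (n + 1) n ≫ cocycleHom z = 0 :=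
  ConcreteCategory.congr_hom ((K.linearYonedaObj R Y).iCycles_d n (n + 1)) z

lemma cocycleHom_injective {K : ChainComplex C ℕ} {Y : C} {n : ℕ} :
    Function.Injective (cocycleHom : (K.linearYonedaObj R Y).cycles n → (K.X n ⟶ Y)) :=
  (ModuleCat.mono_iff_injective ((K.linearYonedaObj R Y).iCycles n)).1 inferInstance

lemma exists_cocycleHom_eq {K : ChainComplex C ℕ} {Y : C} {n : ℕ} (f : K.X n ⟶ Y)
    (hf : K.d (n + 1) n ≫ f = 0) :
    ∃ z : (K.linearYonedaObj R Y).cycles n, cocycleHom z = f := by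
  let D := K.linearYonedaObj R Y
  have hker := D.cyclesIsKernel n (n + 1) (by simp)
  have hexact : (ShortComplex.mk (D.iCycles n) (D.d n (n + 1)) (by simp)).Exact :=
    ShortComplex.exact_of_f_is_kernel _ hker
  exact ((ShortComplex.ShortExact.moduleCat_exact_iff_function_exact _).1 hexact f).1 hf

lemma homologyπ_linearYonedaObj_eq_zero_iff {K : ChainComplex C ℕ} {Y : C} {n : ℕ}
    (z : (K.linearYonedaObj R Y).cycles n) (j : ℕ) (hj : (ComplexShape.up ℕ).prev n = j) :
    (K.linearYonedaObj R Y).homologyπ n z = 0 ↔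
      ∃ g : K.X j ⟶ Y, (K.linearYonedaObj R Y).d j n g = cocycleHom z := by
  let D := K.linearYonedaObj R Y
  have hexact : (ShortComplex.mk (D.toCycles j n) (D.homologyπ n) (by simp)).Exact :=
    ShortComplex.exact_of_g_is_cokernel _ (D.homologyIsCokernel j n hj)
  refine ((ShortComplex.ShortExact.moduleCat_exact_iff_function_exact _).1 hexact z).trans ?_
  refine exists_congr fun g => cocycleHom_injective.eq_iff.symm.trans ?_
  exact Eq.congr_left (ConcreteCategory.congr_hom (D.toCycles_i j n) g)

lemma ext_map_app_comp_isoExt_hom [EnoughProjectives C] {X X' : C}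
    (P : ProjectiveResolution X) (P' : ProjectiveResolution X') {g : X' ⟶ X}
    (φ : ProjectiveResolution.Hom P' P g) (Y : C) (n : ℕ) :
    ((Ext R C n).map g.op).app Y ≫ (P'.isoExt (R := R) n Y).hom =
      (P.isoExt (R := R) n Y).hom ≫
        HomologicalComplex.homologyMap (linearYonedaObjMap R φ.hom Y) n := by
  have h := congrArg Quiver.Hom.unop (ProjectiveResolution.isoLeftDerivedObj_inv_naturality g P' P
    φ.hom (by simpa using φ.hom_f_zero_comp_π_f_zero) ((linearYoneda R C).obj Y).rightOp n)
  have h' := homologyMap_unop_comp_homologyUnop_inv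
    ((((linearYoneda R C).obj Y).rightOp.mapHomologicalComplex _).map φ.hom) n
  exact ((Category.assoc _ _ _).symm.trans (congrArg (· ≫ _) h)).trans
    ((Category.assoc _ _ _).trans ((congrArg (_ ≫ ·) h').trans (Category.assoc _ _ _).symm))

variable [HasExt C] {X X' : C}

lemma extMk_smul (P : ProjectiveResolution X) {Y : C} {n m : ℕ} (f : P.complex.X n ⟶ Y)
    (hm : n + 1 = m) (hf : P.complex.d m n ≫ f = 0) (r : R) :
    P.extMk (r • f) m hm (by simp [hf]) = r • P.extMk f m hm hf := by
  rw [Abelian.Ext.smul_eq_comp_mk₀, ProjectiveResolution.extMk_comp_mk₀]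
  simp only [Linear.comp_smul, Category.comp_id]

-- `ProjectiveResolution.extMk_eq_zero_iff` covers the cochains of positive degree.
lemma extMk_eq_zero_iff_of_degree_zero (P : ProjectiveResolution X) {Y : C}
    (f : P.complex.X 0 ⟶ Y) (hf : P.complex.d 1 0 ≫ f = 0) :
    P.extMk f 1 rfl hf = 0 ↔ f = 0 := by
  refine ⟨fun h => ?_, by rintro rfl; exact P.extMk_zero 1 rfl⟩
  simp only [← P.extEquivCohomologyClass.apply_eq_iff_eq,
    ProjectiveResolution.extEquivCohomologyClass_extMk,
    ProjectiveResolution.extEquivCohomologyClass_zero,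
    CochainComplex.HomComplex.CohomologyClass.mk_eq_zero_iff] at h
  rw [CochainComplex.HomComplex.Cocycle.toSingleMk_mem_coboundaries_iff _ _ _ _ _ 1 (by simp)] at h
  obtain ⟨g, hg⟩ := h
  have hzero : Limits.IsZero (P.cochainComplex.X 1) :=
    CochainComplex.isZero_of_isStrictlyLE P.cochainComplex 0 1 (by lia)
  rw [hzero.eq_of_src g 0, Limits.comp_zero] at hg
  rw [← cancel_epi (P.cochainComplexXIso (-(0 : ℕ)) 0 rfl).hom, ← hg, Limits.comp_zero]

lemma extMk_congr (P : ProjectiveResolution X) {Y : C} {n m : ℕ} {f g : P.complex.X n ⟶ Y}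
    (h : f = g) (hm : n + 1 = m) (hf : P.complex.d m n ≫ f = 0) :
    P.extMk f m hm hf = P.extMk g m hm (h ▸ hf) := by
  subst h; rfl

variable (R) in
/-- The `R`-linear map sending a cocycle of `Hom(P, Y)` to its class in `Ext^n(X, Y)`, for a
projective resolution `P` of `X`. -/
noncomputable def extClassOfCocycle (P : ProjectiveResolution X) (Y : C) (n : ℕ) :
    (P.complex.linearYonedaObj R Y).cycles n →ₗ[R] Abelian.Ext X Y n where
  toFun z := P.extMk (cocycleHom z) (n + 1) rfl (d_comp_cocycleHom z)
  map_add' z w := by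
    rw [P.add_extMk]
    exact extMk_congr P (map_add ((P.complex.linearYonedaObj R Y).iCycles n).hom z w) _ _
  map_smul' r z := by
    rw [RingHom.id_apply, ← extMk_smul]
    exact extMk_congr P (map_smul ((P.complex.linearYonedaObj R Y).iCycles n).hom r z) _ _

lemma extClassOfCocycle_surjective (P : ProjectiveResolution X) (Y : C) (n : ℕ) :
    Function.Surjective (extClassOfCocycle R P Y n) := by
  intro α
  obtain ⟨f, hf, rfl⟩ := P.extMk_surjective α (n + 1) rfl
  obtain ⟨z, rfl⟩ := exists_cocycleHom_eq (R := R) f hf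
  exact ⟨z, rfl⟩

lemma ker_homologyπ_eq_ker_extClassOfCocycle (P : ProjectiveResolution X) (Y : C) (n : ℕ) :
    LinearMap.ker ((P.complex.linearYonedaObj R Y).homologyπ n).hom =
      LinearMap.ker (extClassOfCocycle R P Y n) := by
  ext z
  cases n with
  | zero =>
    refine (homologyπ_linearYonedaObj_eq_zero_iff z _ rfl).trans
      (Iff.trans ?_ (extMk_eq_zero_iff_of_degree_zero P _ (d_comp_cocycleHom z)).symm)
    rw [(P.complex.linearYonedaObj R Y).shape _ 0 (by simp)]
    exact ⟨fun ⟨_, h⟩ => h.symm, fun h => ⟨0, h.symm⟩⟩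
  | succ n =>
    exact (homologyπ_linearYonedaObj_eq_zero_iff z n (by simp)).trans
      (P.extMk_eq_zero_iff _ _ rfl (d_comp_cocycleHom z) n rfl).symm

variable (R) in
/-- The cohomology of `Hom(P, Y)`, for a projective resolution `P` of `X`, is the module
`Ext^n(X, Y)` of Yoneda extensions. -/
noncomputable def homologyLinearYonedaObjEquivExt (P : ProjectiveResolution X) (Y : C) (n : ℕ) :
    (P.complex.linearYonedaObj R Y).homology n ≃ₗ[R] Abelian.Ext X Y n :=
  ((((P.complex.linearYonedaObj R Y).homologyπ n).hom.quotKerEquivOfSurjective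
    ((ModuleCat.epi_iff_surjective _).1 inferInstance)).symm.trans
    (Submodule.quotEquivOfEq _ _ (ker_homologyπ_eq_ker_extClassOfCocycle P Y n))).trans
    ((extClassOfCocycle R P Y n).quotKerEquivOfSurjective (extClassOfCocycle_surjective P Y n))

lemma homologyLinearYonedaObjEquivExt_homologyπ (P : ProjectiveResolution X) (Y : C) (n : ℕ)
    (z : (P.complex.linearYonedaObj R Y).cycles n) :
    homologyLinearYonedaObjEquivExt R P Y n ((P.complex.linearYonedaObj R Y).homologyπ n z) =
      extClassOfCocycle R P Y n z := by
  have hmk : (((P.complex.linearYonedaObj R Y).homologyπ n).hom.quotKerEquivOfSurjective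
      ((ModuleCat.epi_iff_surjective _).1 inferInstance)).symm
        ((P.complex.linearYonedaObj R Y).homologyπ n z) = Submodule.Quotient.mk z :=
    (LinearEquiv.symm_apply_eq _).2 rfl
  exact congrArg ((Submodule.quotEquivOfEq _ _ (ker_homologyπ_eq_ker_extClassOfCocycle P Y n)).trans
    ((extClassOfCocycle R P Y n).quotKerEquivOfSurjective (extClassOfCocycle_surjective P Y n))) hmk

lemma homologyLinearYonedaObjEquivExt_homologyMap (P : ProjectiveResolution X)
    (P' : ProjectiveResolution X') {g : X' ⟶ X} (φ : ProjectiveResolution.Hom P' P g) (Y : C)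
    (n : ℕ) (w : (P.complex.linearYonedaObj R Y).homology n) :
    homologyLinearYonedaObjEquivExt R P' Y n
        (HomologicalComplex.homologyMap (linearYonedaObjMap R φ.hom Y) n w) =
      (Abelian.Ext.mk₀ g).comp (homologyLinearYonedaObjEquivExt R P Y n w) (zero_add n) := by
  obtain ⟨z, rfl⟩ := (ModuleCat.epi_iff_surjective
    ((P.complex.linearYonedaObj R Y).homologyπ n)).1 inferInstance w
  have hπ := ConcreteCategory.congr_hom
    (HomologicalComplex.homologyπ_naturality (linearYonedaObjMap R φ.hom Y) n) z
  have hcocycle : cocycleHom (HomologicalComplex.cyclesMap (linearYonedaObjMap R φ.hom Y) n z) =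
      φ.hom.f n ≫ cocycleHom z := ConcreteCategory.congr_hom
    (HomologicalComplex.cyclesMap_i (linearYonedaObjMap R φ.hom Y) n) z
  refine (congrArg (homologyLinearYonedaObjEquivExt R P' Y n) hπ).trans ?_
  refine (homologyLinearYonedaObjEquivExt_homologyπ P' Y n _).trans ?_
  rw [homologyLinearYonedaObjEquivExt_homologyπ]
  exact (extMk_congr P' hcocycle rfl (d_comp_cocycleHom _)).trans
    (ProjectiveResolution.mk₀_comp_extMk (cocycleHom z) (n + 1) rfl (d_comp_cocycleHom z) φ).symm

variable [EnoughProjectives C]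

/-- The derived functor `Ext R C n` agrees with the module of Yoneda extensions. -/
noncomputable def derivedExtEquiv (X Y : C) (n : ℕ) :
    ((Ext R C n).obj (Opposite.op X)).obj Y ≃ₗ[R] Abelian.Ext X Y n :=
  ((projectiveResolution X).isoExt (R := R) n Y).toLinearEquiv.trans
    (homologyLinearYonedaObjEquivExt R (projectiveResolution X) Y n)

lemma derivedExtEquiv_map_app (g : X' ⟶ X) (Y : C) (n : ℕ)
    (x : ((Ext R C n).obj (Opposite.op X)).obj Y) :
    derivedExtEquiv X' Y n (((Ext R C n).map g.op).app Y x) =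
      (Abelian.Ext.mk₀ g).comp (derivedExtEquiv X Y n x) (zero_add n) := by
  let P := projectiveResolution X
  let P' := projectiveResolution X'
  let φ : ProjectiveResolution.Hom P' P g := ⟨ProjectiveResolution.lift g P' P,
    by simpa using ProjectiveResolution.lift_commutes_zero g P' P⟩
  exact (congrArg (homologyLinearYonedaObjEquivExt R P' Y n)
    (ConcreteCategory.congr_hom (ext_map_app_comp_isoExt_hom P P' φ Y n) x)).trans
    (homologyLinearYonedaObjEquivExt_homologyMap P P' φ Y n ((P.isoExt (R := R) n Y).hom x))

end DerivedExt

/-! ### Ext modules and their long exact sequences -/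

section ModuleExt

variable {R : Type u} [CommRing R]

variable (R) in
/-- `Ext^i_R(N, X)` for unbundled `R`-modules, realised as the module of Yoneda extensions. -/
abbrev ModuleExt (N X : Type u) [AddCommGroup N] [Module R N] [AddCommGroup X] [Module R X]
    (i : ℕ) : Type u :=
  Abelian.Ext (ModuleCat.of R N) (ModuleCat.of R X) i

namespace ModuleExt

instance finite [IsNoetherianRing R] (N X : Type u) [AddCommGroup N] [Module R N]
    [AddCommGroup X] [Module R X] [Module.Finite R N] [Module.Finite R X] (i : ℕ) :
    Module.Finite R (ModuleExt R N X i) :=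
  ModuleCat.finite_ext R _ _ i

section Functoriality

variable (N : Type u) [AddCommGroup N] [Module R N]
variable {X Y Z : Type u} [AddCommGroup X] [Module R X] [AddCommGroup Y] [Module R Y]
  [AddCommGroup Z] [Module R Z]

/-- The covariant functoriality of `Ext`. -/
noncomputable def map (f : X →ₗ[R] Y) (i : ℕ) : ModuleExt R N X i →ₗ[R] ModuleExt R N Y i :=
  (Abelian.Ext.mk₀ (ModuleCat.ofHom f)).postcompOfLinear R (ModuleCat.of R N) (add_zero i)

lemma map_apply (f : X →ₗ[R] Y) (i : ℕ) (x : ModuleExt R N X i) :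
    map N f i x = x.comp (Abelian.Ext.mk₀ (ModuleCat.ofHom f)) (add_zero i) := rfl

lemma map_map (f : X →ₗ[R] Y) (g : Y →ₗ[R] Z) (i : ℕ) (x : ModuleExt R N X i) :
    map N g i (map N f i x) = map N (g ∘ₗ f) i x := by
  simp [map_apply]

lemma map_lsmul (r : R) (i : ℕ) : map N (LinearMap.lsmul R X r) i = LinearMap.lsmul R _ r := by
  ext x : 1
  rw [map_apply, LinearMap.lsmul_apply, Abelian.Ext.smul_eq_comp_mk₀]
  rfl

lemma map_id (i : ℕ) (x : ModuleExt R N X i) : map N (LinearMap.id : X →ₗ[R] X) i x = x :=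
  Abelian.Ext.comp_mk₀_id x

lemma map_zero_map (i : ℕ) : map N (0 : X →ₗ[R] Y) i = 0 := by
  ext x : 1
  rw [map_apply, show ModuleCat.ofHom (0 : X →ₗ[R] Y) = 0 from rfl, Abelian.Ext.mk₀_zero,
    Abelian.Ext.comp_zero, LinearMap.zero_apply]

/-- Isomorphic modules have isomorphic `Ext` modules. -/
noncomputable def congrRight (e : X ≃ₗ[R] Y) (i : ℕ) :
    ModuleExt R N X i ≃ₗ[R] ModuleExt R N Y i :=
  LinearEquiv.ofLinearMap (map N e.toLinearMap i) (map N e.symm.toLinearMap i)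
    (by ext x; simp [map_map, map_id])
    (by ext x; simp [map_map, map_id])

lemma map_zero_injective {f : X →ₗ[R] Y} (hf : Function.Injective f) :
    Function.Injective (map N f 0) :=
  have : Mono (ModuleCat.ofHom f) := (ModuleCat.mono_iff_injective _).2 hf
  Abelian.Ext.postcomp_mk₀_injective_of_mono (ModuleCat.of R N) (ModuleCat.ofHom f)

/-- `Ext⁰` is `Hom`. -/
noncomputable def zeroEquiv : ModuleExt R N X 0 ≃ₗ[R] (N →ₗ[R] X) :=
  (Abelian.Ext.linearEquiv₀ (R := R)).trans ModuleCat.homLinearEquiv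

lemma zeroEquiv_map (f : X →ₗ[R] Y) (x : ModuleExt R N X 0) :
    zeroEquiv N (map N f 0 x) = f ∘ₗ zeroEquiv N x := by
  obtain ⟨h, rfl⟩ := (zeroEquiv N).symm.surjective x
  rw [LinearEquiv.apply_symm_apply, ← LinearEquiv.eq_symm_apply]
  exact Abelian.Ext.mk₀_comp_mk₀ _ _

variable {N} {N' N'' : Type u} [AddCommGroup N'] [Module R N'] [AddCommGroup N''] [Module R N'']

variable (X) in
/-- The contravariant functoriality of `Ext`. -/
noncomputable def comap (g : N' →ₗ[R] N) (i : ℕ) : ModuleExt R N X i →ₗ[R] ModuleExt R N' X i :=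
  (Abelian.Ext.mk₀ (ModuleCat.ofHom g)).precompOfLinear R (ModuleCat.of R X) (zero_add i)

lemma comap_apply (g : N' →ₗ[R] N) (i : ℕ) (x : ModuleExt R N X i) :
    comap X g i x = (Abelian.Ext.mk₀ (ModuleCat.ofHom g)).comp x (zero_add i) := rfl

lemma comap_comap (g : N' →ₗ[R] N) (h : N'' →ₗ[R] N') (i : ℕ) (x : ModuleExt R N X i) :
    comap X h i (comap X g i x) = comap X (g ∘ₗ h) i x := by
  simp only [comap_apply, ModuleCat.ofHom_comp, ← Abelian.Ext.mk₀_comp_mk₀]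
  rw [Abelian.Ext.comp_assoc _ _ _ (add_zero 0) (zero_add i) (by lia)]

lemma comap_id (i : ℕ) (x : ModuleExt R N X i) : comap X (LinearMap.id : N →ₗ[R] N) i x = x :=
  Abelian.Ext.mk₀_id_comp x

variable (X) in
/-- Isomorphic modules in the first argument have isomorphic `Ext` modules. -/
noncomputable def congrLeft (e : N ≃ₗ[R] N') (i : ℕ) :
    ModuleExt R N X i ≃ₗ[R] ModuleExt R N' X i :=
  LinearEquiv.ofLinearMap (comap X e.symm.toLinearMap i) (comap X e.toLinearMap i)
    (by ext x; simp [comap_comap, comap_id])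
    (by ext x; simp [comap_comap, comap_id])

lemma comap_lsmul (r : R) (i : ℕ) : comap X (LinearMap.lsmul R N r) i = LinearMap.lsmul R _ r := by
  ext x : 1
  rw [comap_apply, LinearMap.lsmul_apply, show ModuleCat.ofHom (LinearMap.lsmul R N r) =
    r • 𝟙 (ModuleCat.of R N) from rfl, Abelian.Ext.mk₀_smul, Abelian.Ext.smul_comp,
    Abelian.Ext.mk₀_id_comp]

lemma annihilator_le_annihilator (N X : Type u) [AddCommGroup N] [Module R N] [AddCommGroup X]
    [Module R X] (i : ℕ) : Module.annihilator R N ≤ Module.annihilator R (ModuleExt R N X i) := by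
  refine fun r hr => Module.mem_annihilator.2 fun x => ?_
  have hr : LinearMap.lsmul R N r = 0 := LinearMap.ext (Module.mem_annihilator.1 hr)
  have hx := LinearMap.congr_fun (comap_lsmul (N := N) (X := X) r i) x
  rw [hr, comap_apply, show ModuleCat.ofHom (0 : N →ₗ[R] N) = 0 from rfl, Abelian.Ext.mk₀_zero,
    Abelian.Ext.zero_comp] at hx
  exact hx.symm

lemma le_annihilator (a : Ideal R) (X : Type u) [AddCommGroup X] [Module R X] (i : ℕ) :
    a ≤ Module.annihilator R (ModuleExt R (R ⧸ a) X i) :=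
  Ideal.annihilator_quotient.ge.trans (annihilator_le_annihilator (R ⧸ a) X i)

lemma comap_map (g : N' →ₗ[R] N) (f : X →ₗ[R] Y) (i : ℕ) (x : ModuleExt R N X i) :
    comap Y g i (map N f i x) = map N' f i (comap X g i x) := by
  simp only [comap_apply, map_apply]
  rw [Abelian.Ext.comp_assoc _ _ _ (zero_add i) (add_zero i) (by lia)]

lemma zeroEquiv_comap (g : N' →ₗ[R] N) (x : ModuleExt R N X 0) :
    zeroEquiv N' (comap X g 0 x) = zeroEquiv N x ∘ₗ g := by
  obtain ⟨h, rfl⟩ := (zeroEquiv N).symm.surjective x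
  rw [LinearEquiv.apply_symm_apply, ← LinearEquiv.eq_symm_apply]
  exact Abelian.Ext.mk₀_comp_mk₀ _ _

end Functoriality

section LongExactSequences

variable {A X B : Type u} [AddCommGroup A] [Module R A] [AddCommGroup X] [Module R X]
  [AddCommGroup B] [Module R B] {f : A →ₗ[R] X} {g : X →ₗ[R] B}

lemma shortExact (hf : Function.Injective f) (hg : Function.Surjective g)
    (hfg : Function.Exact f g) :
    (ShortComplex.mk (ModuleCat.ofHom f) (ModuleCat.ofHom g)
      (by ext x; exact hfg.apply_apply_eq_zero x)).ShortExact :=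
  { exact := (ShortComplex.ShortExact.moduleCat_exact_iff_function_exact _).2 hfg
    mono_f := (ModuleCat.mono_iff_injective _).2 hf
    epi_g := (ModuleCat.epi_iff_surjective _).2 hg }

section Covariant

variable (N : Type u) [AddCommGroup N] [Module R N]

/-- The connecting homomorphism of the covariant long exact sequence of `Ext`. -/
noncomputable def δ (hf : Function.Injective f) (hg : Function.Surjective g)
    (hfg : Function.Exact f g) (i : ℕ) : ModuleExt R N B i →ₗ[R] ModuleExt R N A (i + 1) :=
  (shortExact hf hg hfg).extClass.postcompOfLinear R (ModuleCat.of R N) rfl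

lemma exact_map_map (hf : Function.Injective f) (hg : Function.Surjective g)
    (hfg : Function.Exact f g) (i : ℕ) : Function.Exact (map N f i) (map N g i) := by
  refine fun x => ⟨Abelian.Ext.covariant_sequence_exact₂ _ (shortExact hf hg hfg) x, ?_⟩
  rintro ⟨y, rfl⟩
  rw [map_map, hfg.linearMap_comp_eq_zero, map_zero_map, LinearMap.zero_apply]

lemma exact_map_δ (hf : Function.Injective f) (hg : Function.Surjective g)
    (hfg : Function.Exact f g) (i : ℕ) : Function.Exact (map N g i) (δ N hf hg hfg i) := by
  refine fun x => ⟨Abelian.Ext.covariant_sequence_exact₃ _ (shortExact hf hg hfg) x rfl, ?_⟩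
  rintro ⟨y, rfl⟩
  refine (Abelian.Ext.comp_assoc_of_second_deg_zero _ _ _ rfl).trans ?_
  exact (congrArg (y.comp · rfl) (shortExact hf hg hfg).comp_extClass).trans
    (Abelian.Ext.comp_zero ..)

lemma exact_δ_map (hf : Function.Injective f) (hg : Function.Surjective g)
    (hfg : Function.Exact f g) (i : ℕ) : Function.Exact (δ N hf hg hfg i) (map N f (i + 1)) := by
  refine fun x => ⟨(Abelian.Ext.covariant_sequence_exact₁ _ (shortExact hf hg hfg) x · rfl), ?_⟩
  rintro ⟨y, rfl⟩
  refine (Abelian.Ext.comp_assoc_of_third_deg_zero _ _ _ rfl).trans ?_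
  exact (congrArg (y.comp · rfl) (shortExact hf hg hfg).extClass_comp).trans
    (Abelian.Ext.comp_zero ..)

variable {N} in
lemma comap_δ {N' : Type u} [AddCommGroup N'] [Module R N'] (hf : Function.Injective f)
    (hg : Function.Surjective g) (hfg : Function.Exact f g) (p : N' →ₗ[R] N) (i : ℕ)
    (x : ModuleExt R N B i) :
    comap A p (i + 1) (δ N hf hg hfg i x) = δ N' hf hg hfg i (comap B p i x) :=
  (Abelian.Ext.comp_assoc _ _ _ (zero_add i) rfl (by lia)).symm

end Covariant

section Contravariant

variable (Y : Type u) [AddCommGroup Y] [Module R Y]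

/-- The connecting homomorphism of the contravariant long exact sequence of `Ext`. -/
noncomputable def contraδ (hf : Function.Injective f) (hg : Function.Surjective g)
    (hfg : Function.Exact f g) (i : ℕ) : ModuleExt R A Y i →ₗ[R] ModuleExt R B Y (i + 1) :=
  (shortExact hf hg hfg).extClass.precompOfLinear R (ModuleCat.of R Y) (add_comm 1 i)

lemma contraδ_surjective [Module.Projective R X] (hf : Function.Injective f)
    (hg : Function.Surjective g) (hfg : Function.Exact f g) (i : ℕ) :
    Function.Surjective (contraδ Y hf hg hfg i) := fun x =>
  Abelian.Ext.contravariant_sequence_exact₃ (shortExact hf hg hfg) _ x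
    (Abelian.Ext.eq_zero_of_projective (P := ModuleCat.of R X) _) (add_comm 1 i)

lemma exact_comap_contraδ (hf : Function.Injective f) (hg : Function.Surjective g)
    (hfg : Function.Exact f g) (i : ℕ) :
    Function.Exact (comap Y f i) (contraδ Y hf hg hfg i) := by
  refine fun x => ⟨Abelian.Ext.contravariant_sequence_exact₁ (shortExact hf hg hfg) _ x
    (add_comm 1 i), ?_⟩
  rintro ⟨y, rfl⟩
  refine (Abelian.Ext.comp_assoc_of_second_deg_zero _ _ _ (add_comm 1 i)).symm.trans ?_
  exact (congrArg (Abelian.Ext.comp · y (add_comm 1 i))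
    (shortExact hf hg hfg).extClass_comp).trans (Abelian.Ext.zero_comp ..)

lemma contraδ_succ_injective [Module.Projective R X] (hf : Function.Injective f)
    (hg : Function.Surjective g) (hfg : Function.Exact f g) (i : ℕ) :
    Function.Injective (contraδ Y hf hg hfg (i + 1)) := by
  refine (injective_iff_map_eq_zero _).2 fun x hx => ?_
  obtain ⟨y, rfl⟩ := (exact_comap_contraδ Y hf hg hfg (i + 1) x).1 hx
  rw [Abelian.Ext.eq_zero_of_projective (P := ModuleCat.of R X) y, map_zero]

lemma contraδ_zeroEquiv_symm_eq_zero_iff (hf : Function.Injective f)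
    (hg : Function.Surjective g) (hfg : Function.Exact f g) (h : A →ₗ[R] Y) :
    contraδ Y hf hg hfg 0 ((zeroEquiv A).symm h) = 0 ↔ ∃ k : X →ₗ[R] Y, k ∘ₗ f = h := by
  refine (exact_comap_contraδ Y hf hg hfg 0 _).trans ⟨?_, ?_⟩
  · rintro ⟨y, hy⟩
    exact ⟨zeroEquiv X y, by rw [← zeroEquiv_comap, hy, LinearEquiv.apply_symm_apply]⟩
  · rintro ⟨k, rfl⟩
    refine ⟨(zeroEquiv X).symm k, ?_⟩
    rw [LinearEquiv.eq_symm_apply, zeroEquiv_comap, LinearEquiv.apply_symm_apply]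

end Contravariant

end LongExactSequences

section QuotientRing

variable (a : Ideal R) (X : Type u) [AddCommGroup X] [Module R X]

/-- `Hom(R/a, X)` is the submodule of elements of `X` killed by `a`. -/
noncomputable def homQuotientEquiv : ((R ⧸ a) →ₗ[R] X) ≃ₗ[R] Submodule.torsionBySet R X a where
  toFun φ := ⟨φ 1, (Submodule.mem_torsionBySet_iff _ _).2 fun r => by
    have hr : (r : R) • (1 : R ⧸ a) = 0 := by
      rw [Algebra.smul_def, mul_one]
      exact Ideal.Quotient.eq_zero_iff_mem.2 r.2
    rw [← map_smul, hr, map_zero]⟩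
  map_add' _ _ := rfl
  map_smul' _ _ := rfl
  invFun x := Submodule.liftQ a (LinearMap.toSpanSingleton R X x) fun r hr =>
    (Submodule.mem_torsionBySet_iff _ _).1 x.2 ⟨r, hr⟩
  left_inv φ := by
    ext
    exact one_smul R (φ 1)
  right_inv x := Subtype.ext (one_smul R (x : X))

/-- `Ext⁰(R/a, X)` is the submodule of elements of `X` killed by `a`. -/
noncomputable def zeroEquivTorsionBySet :
    ModuleExt R (R ⧸ a) X 0 ≃ₗ[R] Submodule.torsionBySet R X a :=
  (zeroEquiv (R ⧸ a)).trans (homQuotientEquiv a X)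

end QuotientRing

end ModuleExt

end ModuleExt

/-! ### Power torsion -/

section PowerTorsion

variable {R X Y : Type*} [CommRing R] [AddCommGroup X] [Module R X] [AddCommGroup Y] [Module R Y]
  {a : Ideal R}

lemma exists_mem_annihilator_of_forall_exists_smul_eq_zero [Module.Finite R X] {S : Submonoid R}
    (h : ∀ x : X, ∃ s ∈ S, s • x = 0) : ∃ s ∈ S, s ∈ Module.annihilator R X := by
  suffices ∃ s ∈ S, ∀ x ∈ (⊤ : Submodule R X), s • x = 0 by
    obtain ⟨s, hs, hsx⟩ := this
    exact ⟨s, hs, Module.mem_annihilator.2 fun x => hsx x trivial⟩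
  induction (⊤ : Submodule R X), Module.Finite.fg_top (R := R) (M := X) using
    Submodule.fg_induction with
  | singleton x =>
    obtain ⟨s, hs, hsx⟩ := h x
    refine ⟨s, hs, fun y hy => ?_⟩
    obtain ⟨r, rfl⟩ := Submodule.mem_span_singleton.1 hy
    rw [smul_comm, hsx, smul_zero]
  | sup L₁ L₂ _ _ h₁ h₂ =>
    obtain ⟨s, hs, hsx⟩ := h₁
    obtain ⟨t, ht, htx⟩ := h₂
    refine ⟨s * t, S.mul_mem hs ht, fun x hx => ?_⟩
    obtain ⟨y, hy, z, hz, rfl⟩ := Submodule.mem_sup.1 hx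
    rw [smul_add, mul_comm, mul_smul, hsx y hy, mul_comm, mul_smul, htx z hz, smul_zero,
      smul_zero, add_zero]

/-- `X` is `a`-power torsion: each element of `X` is killed by a power of each element of `a`.
For finitely generated `a` this says that `X` equals its `a`-torsion submodule `Γ_a(X)`. -/
def IsPowTorsion (a : Ideal R) (X : Type*) [AddCommGroup X] [Module R X] : Prop :=
  ∀ r ∈ a, ∀ x : X, ∃ n : ℕ, r ^ n • x = 0

namespace IsPowTorsion

lemma mono {b : Ideal R} (h : IsPowTorsion a X) (hb : b ≤ a) : IsPowTorsion b X :=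
  fun r hr => h r (hb hr)

lemma of_injective (h : IsPowTorsion a Y) {φ : X →ₗ[R] Y} (hφ : Function.Injective φ) :
    IsPowTorsion a X := fun r hr x => by
  obtain ⟨n, hn⟩ := h r hr (φ x)
  exact ⟨n, hφ (by rw [map_smul, hn, map_zero])⟩

lemma submodule (h : IsPowTorsion a X) (L : Submodule R X) : IsPowTorsion a L :=
  h.of_injective L.subtype_injective

lemma of_surjective (h : IsPowTorsion a X) {φ : X →ₗ[R] Y} (hφ : Function.Surjective φ) :
    IsPowTorsion a Y := fun r hr y => by
  obtain ⟨x, rfl⟩ := hφ y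
  obtain ⟨n, hn⟩ := h r hr x
  exact ⟨n, by rw [← map_smul, hn, map_zero]⟩

lemma quotient (h : IsPowTorsion a X) (L : Submodule R X) : IsPowTorsion a (X ⧸ L) :=
  h.of_surjective L.mkQ_surjective

lemma pi {m : ℕ} (h : IsPowTorsion a X) : IsPowTorsion a (Fin m → X) :=
  fun r hr x => by
    choose n hn using fun i => h r hr (x i)
    refine ⟨∑ i, n i, funext fun i => ?_⟩
    have hi : n i ≤ ∑ i, n i := Finset.single_le_sum (fun _ _ => Nat.zero_le _) (Finset.mem_univ i)
    rw [Pi.smul_apply, ← Nat.sub_add_cancel hi, pow_add, mul_smul, hn, smul_zero, Pi.zero_apply]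

lemma sup {b : Ideal R} (ha : IsPowTorsion a X) (hb : IsPowTorsion b X) :
    IsPowTorsion (a ⊔ b) X := fun _ hr x => by
  have h_le : a ⊔ b ≤ (Ideal.torsionOf R X x).radical :=
    sup_le (fun s hs => ha s hs x) (fun s hs => hb s hs x)
  exact h_le hr

lemma exists_pow_le_torsionOf (h : IsPowTorsion a X) (ha : a.FG) (x : X) :
    ∃ n : ℕ, a ^ n ≤ Ideal.torsionOf R X x :=
  Ideal.exists_pow_le_of_le_radical_of_fg (fun r hr => h r hr x) ha

lemma span_singleton {f : R} (h : ∀ x : X, ∃ n : ℕ, f ^ n • x = 0) :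
    IsPowTorsion (Ideal.span {f}) X := fun r hr x => by
  obtain ⟨t, rfl⟩ := Ideal.mem_span_singleton'.1 hr
  obtain ⟨n, hn⟩ := h x
  exact ⟨n, by rw [mul_pow, mul_smul, hn, smul_zero]⟩

lemma le_radical_annihilator [Module.Finite R X] (h : IsPowTorsion a X) :
    a ≤ (Module.annihilator R X).radical := fun r hr => by
  obtain ⟨s, ⟨n, rfl⟩, hs⟩ := exists_mem_annihilator_of_forall_exists_smul_eq_zero
    (S := Submonoid.powers r) fun x => (h r hr x).imp' (r ^ ·) fun n hn => ⟨⟨n, rfl⟩, hn⟩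
  exact ⟨n, hs⟩

end IsPowTorsion

lemma mem_torsionBySet_ideal_iff {x : X} :
    x ∈ Submodule.torsionBySet R X a ↔ ∀ r ∈ a, r • x = 0 := by
  simp only [Submodule.mem_torsionBySet_iff, Subtype.forall, SetLike.mem_coe]

/-- The restriction of a linear map to the submodules killed by `a`. -/
def torsionBySetMap (a : Ideal R) (φ : X →ₗ[R] Y) :
    Submodule.torsionBySet R X (a : Set R) →ₗ[R] Submodule.torsionBySet R Y (a : Set R) :=
  φ.restrict fun x hx => mem_torsionBySet_ideal_iff.2 fun r hr => by
    rw [← map_smul, mem_torsionBySet_ideal_iff.1 hx r hr, map_zero]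

lemma torsionBySetMap_injective {φ : X →ₗ[R] Y} (hφ : Function.Injective φ) :
    Function.Injective (torsionBySetMap a φ) := fun _ _ h =>
  Subtype.ext (hφ (congrArg Subtype.val h))

/-- The inclusion of the `b`-torsion of the `a`-torsion of `X` into the `a ⊔ b`-torsion of `X`. -/
def torsionBySetTorsionBySet (a b : Ideal R) (X : Type*) [AddCommGroup X] [Module R X] :
    Submodule.torsionBySet R (Submodule.torsionBySet R X (a : Set R)) (b : Set R) →ₗ[R]
      Submodule.torsionBySet R X ((a ⊔ b : Ideal R) : Set R) :=
  (Submodule.subtype _ ∘ₗ Submodule.subtype _).codRestrict _ fun x =>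
    mem_torsionBySet_ideal_iff.2 fun r hr => by
      obtain ⟨s, hs, t, ht, rfl⟩ := Submodule.mem_sup.1 hr
      rw [add_smul]
      exact (congrArg₂ (· + ·) (mem_torsionBySet_ideal_iff.1 x.1.2 s hs)
        (congrArg Subtype.val (mem_torsionBySet_ideal_iff.1 x.2 t ht))).trans (add_zero 0)

lemma torsionBySetTorsionBySet_injective (a b : Ideal R) :
    Function.Injective (torsionBySetTorsionBySet a b X) := fun _ _ h =>
  Subtype.ext (Subtype.ext (congrArg Subtype.val h :))

lemma IsPowTorsion.subsingleton_of_torsionBySet_eq_bot (hX : IsPowTorsion a X) (ha : a.FG)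
    (h : Submodule.torsionBySet R X (a : Set R) = ⊥) : Subsingleton X := by
  refine subsingleton_of_forall_eq 0 fun x => ?_
  obtain ⟨n, hn⟩ := hX.exists_pow_le_torsionOf ha x
  induction n generalizing x with
  | zero => rwa [pow_zero, Ideal.one_eq_top, top_le_iff, Ideal.torsionOf_eq_top_iff] at hn
  | succ n ih =>
    refine ih x fun r hr => ?_
    rw [Ideal.mem_torsionOf_iff, ← Submodule.mem_bot R, ← h]
    refine mem_torsionBySet_ideal_iff.2 fun s hs => ?_
    rw [← mul_smul]
    exact hn (pow_succ' a n ▸ Ideal.mul_mem_mul hs hr)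

lemma IsPowTorsion.exists_smul_eq_zero_of_torsionBySet {S : Submonoid R}
    (hX : IsPowTorsion a X) (ha : a.FG)
    (h : ∀ x ∈ Submodule.torsionBySet R X (a : Set R), ∃ s ∈ S, s • x = 0) (x : X) :
    ∃ s ∈ S, s • x = 0 := by
  let T := Submodule.torsion' R X S
  have mem_T {x : X} : x ∈ T ↔ ∃ s ∈ S, s • x = 0 := by simp [T, Submonoid.smul_def]
  suffices h_bot : Submodule.torsionBySet R (X ⧸ T) (a : Set R) = ⊥ by
    have := (hX.quotient T).subsingleton_of_torsionBySet_eq_bot ha h_bot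
    exact mem_T.1 ((Submodule.Quotient.mk_eq_zero T).1 (Subsingleton.elim (T.mkQ x) 0))
  refine (Submodule.eq_bot_iff _).2 fun y hy => ?_
  obtain ⟨x, rfl⟩ := T.mkQ_surjective y
  have h_smul (r : R) (hr : r ∈ a) : r • x ∈ T :=
    (Submodule.Quotient.mk_eq_zero T).1 (mem_torsionBySet_ideal_iff.1 hy r hr)
  let ax : Submodule R X := Submodule.map (LinearMap.toSpanSingleton R X x) a
  have : Module.Finite R ax := .of_fg (Submodule.FG.map _ ha)
  have h_ax (y : ax) : ∃ s ∈ S, s • y = 0 := by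
    obtain ⟨_, r, hr, rfl⟩ := y
    exact (mem_T.1 (h_smul r hr)).imp fun s hs => ⟨hs.1, Subtype.ext hs.2⟩
  obtain ⟨s, hs, hs_ann⟩ := exists_mem_annihilator_of_forall_exists_smul_eq_zero h_ax
  obtain ⟨t, ht, htx⟩ := h (s • x) <| mem_torsionBySet_ideal_iff.2 fun r hr => by
    rw [smul_comm]
    exact congrArg Subtype.val (Module.mem_annihilator.1 hs_ann ⟨r • x, r, hr, rfl⟩)
  refine (Submodule.Quotient.mk_eq_zero T).2 (mem_T.2 ⟨t * s, S.mul_mem ht hs, ?_⟩)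
  rw [mul_smul, htx]

end PowerTorsion

section FiniteUpTo

variable {R A B C : Type*} [CommRing R] [AddCommGroup A] [Module R A] [AddCommGroup B] [Module R B]
  [AddCommGroup C] [Module R C] {S : Submonoid R}

/-- `A` is finitely generated up to `S`-torsion, that is, it has a finitely generated submodule
with `S`-torsion quotient; over a noetherian ring this means that `S⁻¹A` is finitely generated. -/
def FiniteUpTo (S : Submonoid R) (A : Type*) [AddCommGroup A] [Module R A] : Prop :=
  ∃ L : Submodule R A, L.FG ∧ ∀ x, ∃ s ∈ S, s • x ∈ L

namespace FiniteUpTo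

lemma of_finite [h : Module.Finite R A] (S : Submonoid R) : FiniteUpTo S A :=
  ⟨⊤, h.1, fun _ => ⟨1, S.one_mem, trivial⟩⟩

lemma finite (h : FiniteUpTo (⊥ : Submonoid R) A) : Module.Finite R A := by
  obtain ⟨L, hL, h⟩ := h
  have h_top : L = ⊤ := eq_top_iff.2 fun x _ => by
    obtain ⟨s, rfl, hs⟩ := h x
    rwa [one_smul] at hs
  exact ⟨h_top ▸ hL⟩

lemma powers_mul {f : R} (h : FiniteUpTo (Submonoid.powers f) A) (s : R) :
    FiniteUpTo (Submonoid.powers (s * f)) A := by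
  obtain ⟨L, hL, h⟩ := h
  refine ⟨L, hL, fun x => ?_⟩
  obtain ⟨_, ⟨n, rfl⟩, hn⟩ := h x
  exact ⟨(s * f) ^ n, ⟨n, rfl⟩, by rw [mul_pow, mul_smul]; exact L.smul_mem _ hn⟩

lemma of_torsion (h : ∀ x : A, ∃ s ∈ S, s • x = 0) : FiniteUpTo S A :=
  ⟨⊥, Submodule.fg_bot, h⟩

lemma of_surjective (h : FiniteUpTo S A) {φ : A →ₗ[R] B} (hφ : Function.Surjective φ) :
    FiniteUpTo S B := by
  obtain ⟨L, hL, h⟩ := h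
  refine ⟨L.map φ, hL.map φ, fun y => ?_⟩
  obtain ⟨x, rfl⟩ := hφ y
  exact (h x).imp fun s hs => ⟨hs.1, s • x, hs.2, map_smul φ s x⟩

lemma of_exact [IsNoetherianRing R] {φ : A →ₗ[R] B} {ψ : B →ₗ[R] C} (h : Function.Exact φ ψ)
    (hA : FiniteUpTo S A) (hC : FiniteUpTo S C) : FiniteUpTo S B := by
  obtain ⟨L, hL, hA⟩ := hA
  obtain ⟨M, hM, hC⟩ := hC
  have : IsNoetherian R M := isNoetherian_of_fg_of_noetherian M hM
  obtain ⟨t, ht⟩ : (M ⊓ LinearMap.range ψ).FG :=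
    have : IsNoetherian R (M ⊓ LinearMap.range ψ : Submodule R C) := isNoetherian_of_le inf_le_left
    Module.Finite.iff_fg.1 inferInstance
  classical
  obtain ⟨t', -, rfl⟩ : ∃ t' : Finset B, (t' : Set B) ⊆ Set.univ ∧ t'.image ψ = t := by
    rw [← Finset.subset_set_image_iff, Set.image_univ]
    exact Submodule.subset_span.trans (ht.le.trans inf_le_right)
  refine ⟨L.map φ ⊔ Submodule.span R t', (hL.map φ).sup ⟨t', rfl⟩, fun b => ?_⟩
  rw [Finset.coe_image, ← Submodule.map_span] at ht
  obtain ⟨s, hs, hsb⟩ := hC (ψ b)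
  obtain ⟨l, hl, hlb⟩ : ψ (s • b) ∈ (Submodule.span R t').map ψ :=
    ht.ge ⟨by rwa [map_smul], s • b, rfl⟩
  obtain ⟨x, hx⟩ := (h (s • b - l)).1 (by rw [map_sub, hlb, sub_self])
  obtain ⟨r, hr, hrx⟩ := hA x
  have h_eq : (r * s) • b = φ (r • x) + r • l := by
    rw [map_smul, hx, ← smul_add, sub_add_cancel, mul_smul]
  exact ⟨r * s, S.mul_mem hr hs,
    h_eq ▸ Submodule.add_mem_sup ⟨_, hrx, rfl⟩ (Submodule.smul_mem _ r hl)⟩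

end FiniteUpTo

lemma finite_of_exact [IsNoetherianRing R] {φ : A →ₗ[R] B} {ψ : B →ₗ[R] C}
    (h : Function.Exact φ ψ) [Module.Finite R A] [Module.Finite R C] : Module.Finite R B :=
  (FiniteUpTo.of_exact (S := ⊥) h (.of_finite ⊥) (.of_finite ⊥)).finite

lemma finite_of_pow_le_annihilator [IsNoetherianRing R] {a : Ideal R} (n : ℕ)
    (hn : a ^ n ≤ Module.annihilator R A)
    (h : Module.Finite R (Submodule.torsionBySet R A (a : Set R))) : Module.Finite R A := by
  induction n generalizing A with
  | zero =>
    rw [pow_zero, Ideal.one_eq_top, top_le_iff, Module.annihilator_eq_top_iff] at hn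
    infer_instance
  | succ n ih =>
    let aA : Submodule R A := a • ⊤
    have : Module.Finite R aA := by
      refine ih ?_ (.of_injective _ (torsionBySetMap_injective aA.subtype_injective))
      rw [← Submodule.annihilator_top, Submodule.le_annihilator_iff] at hn
      exact Submodule.le_annihilator_iff.2 (by rw [← mul_smul, ← pow_succ, hn])
    obtain ⟨s, hs⟩ := IsNoetherian.noetherian a
    let φ : A →ₗ[R] (s → aA) := LinearMap.pi fun r =>
      (LinearMap.lsmul R A r).codRestrict aA fun x =>
        Submodule.smul_mem_smul (hs ▸ Submodule.subset_span r.2) trivial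
    have hφ : Function.Exact (Submodule.torsionBySet R A (a : Set R)).subtype φ := fun x => by
      rw [← LinearMap.coe_range, Submodule.range_subtype, SetLike.mem_coe]
      have h_span := Submodule.torsionBySet_eq_torsionBySet_span (M := A) (s : Set R)
      rw [Ideal.submodule_span_eq.symm, hs] at h_span
      rw [← h_span, Submodule.mem_torsionBySet_iff]
      exact funext_iff.trans (forall_congr' fun r => Subtype.ext_iff)
    exact finite_of_exact hφ

lemma FiniteUpTo.of_finite_isLocalizedModule (R' : Type*) {A' : Type*} [CommRing R']
    [Algebra R R'] [IsLocalization S R'] [AddCommGroup A'] [Module R A'] [Module R' A']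
    [IsScalarTower R R' A'] (g : A →ₗ[R] A') [IsLocalizedModule S g] [h : Module.Finite R' A'] :
    FiniteUpTo S A := by
  obtain ⟨t, ht⟩ := h.1
  choose x hx using IsLocalizedModule.surj S g
  let L : Submodule R A := Submodule.span R ((fun y => (x y).1) '' t)
  have hL : L.localized' R' S g = ⊤ := by
    rw [← top_le_iff, ← ht, Submodule.span_le]
    exact fun y hy => (Submodule.mem_localized' ..).2 ⟨(x y).1, Submodule.subset_span ⟨y, hy, rfl⟩,
      (x y).2, (IsLocalizedModule.mk'_eq_iff).2 (hx y).symm⟩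
  refine ⟨L, Submodule.fg_span (t.finite_toSet.image _), fun a => ?_⟩
  obtain ⟨l, hl, s, hls⟩ := (Submodule.mem_localized' ..).1 (hL.ge (Submodule.mem_top (x := g a)))
  rw [IsLocalizedModule.mk'_eq_iff, Submonoid.smul_def, ← map_smul] at hls
  obtain ⟨c, hc⟩ := (IsLocalizedModule.eq_iff_exists S g).1 hls
  refine ⟨c * s, S.mul_mem c.2 s.2, ?_⟩
  rw [mul_smul]
  exact hc ▸ L.smul_mem _ hl

end FiniteUpTo

namespace ModuleExt

variable {R : Type u} [CommRing R] [IsNoetherianRing R]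
  {X : Type u} [AddCommGroup X] [Module R X]

lemma exists_surjective_of_submodule_pi (N : Type u) [AddCommGroup N] [Module R N]
    [Module.Finite R N] (X : Type u) [AddCommGroup X] [Module R X] (i : ℕ) :
    ∃ (m : ℕ) (Z : Submodule R (Fin m → X)) (φ : Z →ₗ[R] ModuleExt R N X i),
      Function.Surjective φ := by
  induction i generalizing N with
  | zero =>
    obtain ⟨m, g, hg⟩ := Module.Finite.exists_fin' R N
    let ev : (N →ₗ[R] X) →ₗ[R] (Fin m → X) :=
      LinearMap.pi fun k => LinearMap.applyₗ (g (Pi.single k 1))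
    have h_ev : Function.Injective ev := fun φ ψ h => by
      refine LinearMap.cancel_right hg |>.1 (LinearMap.pi_ext' fun k => ?_)
      ext
      exact congrFun h k
    let e := (LinearEquiv.ofInjective ev h_ev).symm.trans (zeroEquiv N).symm
    exact ⟨m, LinearMap.range ev, e.toLinearMap, e.surjective⟩
  | succ i ih =>
    obtain ⟨m, g, hg⟩ := Module.Finite.exists_fin' R N
    obtain ⟨k, Z, φ, hφ⟩ := ih (LinearMap.ker g)
    have h_inj := (LinearMap.ker g).subtype_injective
    have h_exact := LinearMap.exact_subtype_ker_map g
    exact ⟨k, Z, contraδ X h_inj hg h_exact i ∘ₗ φ,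
      (contraδ_surjective X h_inj hg h_exact i).comp hφ⟩

lemma isPowTorsion {a : Ideal R} (N : Type u) [AddCommGroup N] [Module R N] [Module.Finite R N]
    (h : IsPowTorsion a X) (i : ℕ) : IsPowTorsion a (ModuleExt R N X i) := by
  obtain ⟨m, Z, φ, hφ⟩ := exists_surjective_of_submodule_pi (R := R) N X i
  exact (h.pi.submodule Z).of_surjective hφ

end ModuleExt

/-! ### Artinian modules -/

section Melkersson

lemma exists_forall_forall_eq_of_antitone {α : Type*} [PartialOrder α] [WellFoundedLT α]
    {W : ℕ → ℕ → α} (h_left : ∀ n, Antitone (W · n)) (h_right : ∀ j, Antitone (W j)) :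
    ∃ n, ∀ m, n ≤ m → ∀ j, W j m = W j n := by
  have stabilizes {g : ℕ → α} (hg : Antitone g) : ∃ n, ∀ m, n ≤ m → g n = g m :=
    wellFoundedGT_iff_monotone_chain_condition.1 (inferInstanceAs (WellFoundedGT αᵒᵈ))
      ⟨OrderDual.toDual ∘ g, hg⟩
  obtain ⟨k, hk⟩ := stabilizes (g := fun n => W n n) fun m n h =>
    (h_left n h).trans (h_right m h)
  choose n hn using fun j => stabilizes (h_right j)
  have hk' (j m : ℕ) (hj : k ≤ j) (hm : k ≤ m) : W j m = W k k := by
    refine le_antisymm ((h_left m hj).trans (h_right k hm)) ?_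
    rw [hk (max j m) (hj.trans (le_max_left j m))]
    exact (h_left _ (le_max_left j m)).trans (h_right j (le_max_right j m))
  refine ⟨k + ∑ j ∈ Finset.range k, n j, fun m hm j => ?_⟩
  rcases lt_or_ge j k with hj | hj
  · have h_le : n j ≤ k + ∑ j ∈ Finset.range k, n j := le_add_left <|
      Finset.single_le_sum (fun _ _ => Nat.zero_le _) (Finset.mem_range.2 hj)
    rw [← hn j m (h_le.trans hm), ← hn j _ h_le]
  · rw [hk' j m hj (le_of_add_le_left hm), hk' j _ hj (Nat.le_add_right k _)]

variable {R X : Type*} [CommRing R] [AddCommGroup X] [Module R X]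

lemma isArtinian_of_ker_lsmul {f : R} (hX : ∀ x : X, ∃ n : ℕ, f ^ n • x = 0)
    [IsArtinian R (LinearMap.ker (LinearMap.lsmul R X f))] : IsArtinian R X := by
  let V := LinearMap.ker (LinearMap.lsmul R X f)
  let W (j : ℕ) (N : Submodule R X) : Submodule R V :=
    (N.map (LinearMap.lsmul R X (f ^ j))).comap V.subtype
  have W_antitone (N : Submodule R X) : Antitone (W · N) := by
    rintro j k hjk v ⟨y, hy, hv⟩
    refine ⟨f ^ (k - j) • y, N.smul_mem _ hy, ?_⟩
    rw [← hv, LinearMap.lsmul_apply, ← mul_smul, ← pow_add, Nat.add_sub_cancel' hjk]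
    rfl
  have W_mono (j : ℕ) : Monotone (W j) := fun N N' h =>
    Submodule.comap_mono (Submodule.map_mono h)
  have le_of_W_le {N N' : Submodule R X} (h : N ≤ N') (hW : ∀ j, W j N' ≤ W j N) : N' ≤ N := by
    suffices h_pow : ∀ m : ℕ, ∀ x ∈ N', f ^ m • x = 0 → x ∈ N from
      fun x hx => (hX x).elim fun m hm => h_pow m x hx hm
    intro m
    induction m with
    | zero => exact fun x _ h0 => by rw [← one_smul R x, ← pow_zero f, h0]; exact N.zero_mem
    | succ m ih =>
      intro x hx h0
      have hv : f ^ m • x ∈ V := by rwa [pow_succ', mul_smul] at h0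
      obtain ⟨y, hy, hxy⟩ := hW m (show (⟨f ^ m • x, hv⟩ : V) ∈ W m N' from ⟨x, hx, rfl⟩)
      have h_sub : x - y ∈ N := ih (x - y) (N'.sub_mem hx (h hy)) <| by
        rw [smul_sub, sub_eq_zero]
        exact hxy.symm
      exact sub_add_cancel x y ▸ N.add_mem h_sub hy
  refine monotone_stabilizes_iff_artinian.1 fun N => ?_
  have hN : Antitone fun n => OrderDual.ofDual (N n) := N.monotone
  obtain ⟨n, hn⟩ := exists_forall_forall_eq_of_antitone
    (W := fun j n => W j (OrderDual.ofDual (N n)))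
    (fun n => W_antitone _) fun j _ _ h => W_mono j (hN h)
  exact ⟨n, fun m hm => le_antisymm (N.monotone hm) (le_of_W_le (hN hm) fun j => (hn m hm j).ge)⟩

lemma IsPowTorsion.isArtinian {a : Ideal R} (ha : a.FG) (hX : IsPowTorsion a X)
    (h : IsArtinian R (Submodule.torsionBySet R X (a : Set R))) : IsArtinian R X := by
  induction a, ha using Submodule.fg_induction generalizing X with
  | singleton f =>
    rw [Submodule.torsionBySet_span_singleton_eq] at h
    have : IsArtinian R (LinearMap.ker (LinearMap.lsmul R X f)) := h
    exact isArtinian_of_ker_lsmul (hX f (Ideal.mem_span_singleton_self f))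
  | sup a b _ _ iha ihb =>
    refine iha (hX.mono le_sup_left) (ihb ((hX.mono le_sup_right).submodule _) ?_)
    exact isArtinian_of_injective _ (torsionBySetTorsionBySet_injective a b)

end Melkersson

section SecondaryRepresentation

open scoped Pointwise

variable {R Y : Type*} [CommRing R] [AddCommGroup Y] [Module R Y]

lemma smul_ne_self_of_mem_radical_annihilator {N : Submodule R Y} (hN : N ≠ ⊥) {r : R}
    (hr : r ∈ N.annihilator.radical) : r • N ≠ N := by
  intro h
  obtain ⟨n, hn⟩ := hr
  have h_pow (k : ℕ) : r ^ k • N = N := by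
    induction k with
    | zero => rw [pow_zero, one_smul]
    | succ k ih => rw [pow_succ, mul_smul, h, ih]
  refine hN (eq_bot_iff.2 ((h_pow n).ge.trans ?_))
  rintro _ ⟨y, hy, rfl⟩
  exact Submodule.mem_annihilator.1 hn y hy

lemma finite_of_le_radical_annihilator [IsNoetherianRing R] {a : Ideal R} (N : Submodule R Y)
    (h : Module.Finite R (Submodule.torsionBySet R Y (a : Set R)))
    (ha : a ≤ N.annihilator.radical) : Module.Finite R N := by
  obtain ⟨n, hn⟩ := Ideal.exists_pow_le_of_le_radical_of_fg ha (IsNoetherian.noetherian a)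
  exact finite_of_pow_le_annihilator n hn
    (.of_injective _ (torsionBySetMap_injective N.subtype_injective))

variable [IsArtinian R Y] {N : Submodule R Y}

lemma smul_eq_self_of_supIrred (hN : SupIrred N) {r : R} (hr : r ∉ N.annihilator.radical) :
    r • N = N := by
  let φ : Module.End R N := algebraMap R _ r
  have hφ (n : ℕ) (x : N) : (φ ^ n) x = r ^ n • x := by
    rw [← map_pow, Module.algebraMap_end_apply]
  obtain ⟨n, hn⟩ := Filter.eventually_atTop.1 φ.eventually_codisjoint_ker_pow_range_pow
  have h_sup : (LinearMap.ker (φ ^ (n + 1))).map N.subtype ⊔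
      (LinearMap.range (φ ^ (n + 1))).map N.subtype = N := by
    rw [← Submodule.map_sup, (hn (n + 1) n.le_succ).eq_top, Submodule.map_top,
      Submodule.range_subtype]
  rcases hN.2 h_sup with h_ker | h_range
  · refine absurd ⟨n + 1, Submodule.mem_annihilator.2 fun x hx => ?_⟩ hr
    obtain ⟨y, hy, rfl⟩ := h_ker.ge hx
    exact congrArg Subtype.val ((hφ _ y).symm.trans hy)
  · refine le_antisymm (Submodule.map_le_iff_le_comap.2 fun x hx => N.smul_mem r hx) ?_
    intro x hx
    obtain ⟨_, ⟨z, rfl⟩, rfl⟩ := h_range.ge hx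
    refine ⟨(r ^ n • z : N), Subtype.prop _, ?_⟩
    rw [hφ, pow_succ', mul_smul]
    rfl

lemma isPrime_radical_annihilator_of_supIrred (hN : SupIrred N) :
    N.annihilator.radical.IsPrime := by
  have h_bot : N ≠ ⊥ := hN.ne_bot
  refine ⟨fun h => ?_, fun {r s} hrs => ?_⟩
  · have h_one : (1 : R) ∈ N.annihilator.radical := h.ge Submodule.mem_top
    exact smul_ne_self_of_mem_radical_annihilator h_bot h_one (one_smul R N)
  · by_contra! h
    refine smul_ne_self_of_mem_radical_annihilator h_bot hrs ?_
    rw [mul_smul, smul_eq_self_of_supIrred hN h.2, smul_eq_self_of_supIrred hN h.1]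

lemma exists_finite_primes_quotient_range_lsmul_finite [IsNoetherianRing R] {a : Ideal R}
    (h : Module.Finite R (Submodule.torsionBySet R Y (a : Set R))) :
    ∃ T : Set (Ideal R), T.Finite ∧ (∀ p ∈ T, p.IsPrime ∧ ¬ a ≤ p) ∧
      ∀ x : R, (∀ p ∈ T, x ∉ p) →
        Module.Finite R (Y ⧸ LinearMap.range (LinearMap.lsmul R Y x)) := by
  classical
  obtain ⟨s, hs, hs_irred⟩ := exists_supIrred_decomposition (⊤ : Submodule R Y)
  let T := {p | p ∈ s.image (fun N => N.annihilator.radical) ∧ ¬ a ≤ p}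
  refine ⟨T, (Finset.finite_toSet _).subset fun p hp => hp.1, fun p hp => ?_, fun x hx => ?_⟩
  · obtain ⟨N, hN, rfl⟩ := Finset.mem_image.1 hp.1
    exact ⟨isPrime_radical_annihilator_of_supIrred (hs_irred hN), hp.2⟩
  let L := (s.filter fun N => a ≤ N.annihilator.radical).sup id
  have hL : L.FG := Submodule.fg_finset_sup _ _ fun N hN => Module.Finite.iff_fg.1 <|
    finite_of_le_radical_annihilator N h (Finset.mem_filter.1 hN).2
  have h_top : LinearMap.range (LinearMap.lsmul R Y x) ⊔ L = ⊤ := by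
    rw [← top_le_iff, ← hs, Finset.sup_le_iff]
    intro N hN
    by_cases ha : a ≤ N.annihilator.radical
    · exact (Finset.le_sup (f := id) (Finset.mem_filter.2 ⟨hN, ha⟩)).trans le_sup_right
    · have hxN : x ∉ N.annihilator.radical := hx _ ⟨Finset.mem_image_of_mem _ hN, ha⟩
      refine (smul_eq_self_of_supIrred (hs_irred hN) hxN).ge.trans (le_sup_of_le_left ?_)
      rintro _ ⟨y, -, rfl⟩
      exact ⟨y, rfl⟩
  have : Module.Finite R L := Module.Finite.iff_fg.2 hL
  refine .of_surjective ((Submodule.mkQ _).comp L.subtype) ?_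
  rw [← LinearMap.range_eq_top, LinearMap.range_comp, Submodule.range_subtype,
    Submodule.map_mkQ_eq_top, h_top]

lemma exists_mem_forall_notMem_prime {R : Type*} [CommRing R] {a : Ideal R} {T : Set (Ideal R)}
    (hT : T.Finite) (h : ∀ p ∈ T, p.IsPrime ∧ ¬ a ≤ p) : ∃ x ∈ a, ∀ p ∈ T, x ∉ p := by
  by_contra! h_cover
  have h_subset : (a : Set R) ⊆ ⋃ p ∈ T, (p : Set R) := fun x hx => by
    simpa only [Set.mem_iUnion, SetLike.mem_coe, exists_prop] using h_cover x hx
  obtain ⟨p, hp, hap⟩ := (Ideal.subset_union_prime_finite hT (f := id) 0 0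
    fun p hp _ _ => (h p hp).1).1 h_subset
  exact (h p hp).2 hap

end SecondaryRepresentation

lemma ModuleExt.finite_of_isArtinian {R X : Type u} [CommRing R] [IsNoetherianRing R]
    [AddCommGroup X] [Module R X] [IsArtinian R X] {a : Ideal R}
    (h : Module.Finite R (Submodule.torsionBySet R X (a : Set R))) (i : ℕ) :
    Module.Finite R (ModuleExt R (R ⧸ a) X i) := by
  obtain ⟨m, Z, φ, hφ⟩ := ModuleExt.exists_surjective_of_submodule_pi (R := R) (R ⧸ a) X i
  let ψ : Submodule.torsionBySet R Z (a : Set R) →ₗ[R]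
      (Fin m → Submodule.torsionBySet R X (a : Set R)) :=
    LinearMap.pi fun k => torsionBySetMap a (LinearMap.proj k ∘ₗ Z.subtype)
  have hψ : Function.Injective ψ := fun z w hzw =>
    Subtype.ext (Subtype.ext (funext fun k => congrArg Subtype.val (congrFun hzw k)))
  have hZ : Module.Finite R (Submodule.torsionBySet R Z (a : Set R)) := .of_injective ψ hψ
  obtain ⟨T, hT, hT_prime, h_fin⟩ := exists_finite_primes_quotient_range_lsmul_finite hZ
  obtain ⟨x, hxa, hxT⟩ := exists_mem_forall_notMem_prime hT hT_prime
  have := h_fin x hxT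
  have h_ker : LinearMap.range (LinearMap.lsmul R Z x) ≤ LinearMap.ker φ := by
    rintro _ ⟨z, rfl⟩
    rw [LinearMap.mem_ker, LinearMap.lsmul_apply, map_smul]
    exact Module.mem_annihilator.1 (le_annihilator a X i hxa) (φ z)
  exact .of_surjective (Submodule.liftQ _ φ h_ker) fun e =>
    (hφ e).elim fun z hz => ⟨Submodule.Quotient.mk z, hz⟩

/-! ### Krull dimension -/

section Dimension

variable {R : Type*} [CommRing R] {I J : Ideal R}

lemma ringKrullDim_quotient_le_iff {n : ℕ} : ringKrullDim (R ⧸ I) ≤ n ↔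
    ∀ l : LTSeries (PrimeSpectrum R), I ≤ l.head.asIdeal → l.length ≤ n := by
  rw [ringKrullDim_quotient, Order.krullDim, iSup_le_iff]
  refine ⟨fun h l hl => ?_, fun h l => ?_⟩
  · let l' : LTSeries (PrimeSpectrum.zeroLocus (I : Set R)) :=
      ⟨l.length, fun i => ⟨l i, hl.trans (l.monotone (Fin.zero_le i))⟩, l.step⟩
    exact_mod_cast h l'
  · exact_mod_cast h (l.map Subtype.val fun _ _ => id) l.head.2

lemma ringKrullDim_quotient_le_of_le_radical (h : I ≤ J.radical) :
    ringKrullDim (R ⧸ J) ≤ ringKrullDim (R ⧸ I) := by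
  rw [ringKrullDim_quotient, ringKrullDim_quotient]
  have h_subset : PrimeSpectrum.zeroLocus (J : Set R) ⊆ PrimeSpectrum.zeroLocus (I : Set R) :=
    PrimeSpectrum.zeroLocus_subset_zeroLocus_iff _ _ |>.2 h
  exact Order.krullDim_le_of_strictMono (Set.inclusion h_subset) fun _ _ => id

lemma ringKrullDim_quotient_sup_span_singleton_le {n : ℕ} (hJ : ringKrullDim (R ⧸ J) ≤ n + 1)
    (hI : ringKrullDim (R ⧸ I) ≤ n) {z : R} (hz : ∀ p ∈ J.minimalPrimes, ¬ I ≤ p → z ∉ p) :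
    ringKrullDim (R ⧸ J ⊔ Ideal.span {z}) ≤ n := by
  refine ringKrullDim_quotient_le_iff.2 fun l hl => ?_
  obtain ⟨p, hp, hpl⟩ := Ideal.exists_minimalPrimes_le (le_sup_left.trans hl)
  by_cases hIp : I ≤ p
  · exact ringKrullDim_quotient_le_iff.1 hI l (hIp.trans hpl)
  have hz_mem : z ∈ l.head.asIdeal := hl (Ideal.mem_sup_right (Ideal.mem_span_singleton_self z))
  have h_lt : ⟨p, hp.1.1⟩ < l.head :=
    lt_of_le_of_ne hpl fun h => hz p hp hIp ((PrimeSpectrum.ext_iff.1 h).ge hz_mem)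
  have h_cons : (l.cons _ h_lt).length ≤ n + 1 := ringKrullDim_quotient_le_iff.1
    (by exact_mod_cast hJ) (l.cons _ h_lt) (by rw [RelSeries.head_cons]; exact hp.1.2)
  rwa [RelSeries.cons_length, Nat.add_le_add_iff_right] at h_cons

lemma ringKrullDim_quotient_sup_span_singleton_le_of_notMem {n : ℕ}
    (hJ : ringKrullDim (R ⧸ J) ≤ n + 1) {z : R} (hz : ∀ p ∈ J.minimalPrimes, z ∉ p) :
    ringKrullDim (R ⧸ J ⊔ Ideal.span {z}) ≤ n := by
  have h_top : ringKrullDim (R ⧸ (⊤ : Ideal R)) ≤ n := by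
    rw [ringKrullDim_eq_bot_of_subsingleton]
    exact bot_le
  exact ringKrullDim_quotient_sup_span_singleton_le hJ h_top fun p hp _ => hz p hp

lemma ringKrullDim_quotient_le_add_one_of_mem_jacobson [IsNoetherianRing R] {f : R}
    (hf : f ∈ Ring.jacobson R) :
    ringKrullDim (R ⧸ I) ≤ ringKrullDim (R ⧸ I ⊔ Ideal.span {f}) + 1 := by
  have h := Module.supportDim_le_supportDim_quotSMulTop_succ_of_mem_jacobson (M := R ⧸ I)
    ((Module.annihilator R (R ⧸ I)).ringJacobson_le_jacobson hf)
  rwa [Module.supportDim_quotient_eq_ringKrullDim, Module.supportDim,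
    Module.support_quotSMulTop, Module.support_eq_zeroLocus, Ideal.annihilator_quotient,
    ← PrimeSpectrum.zeroLocus_union, ← PrimeSpectrum.zeroLocus_span, Ideal.span_union,
    Ideal.span_eq, ← ringKrullDim_quotient] at h

lemma isArtinian_of_ringKrullDim_quotient_le_zero [IsNoetherianRing R]
    (hI : ringKrullDim (R ⧸ I) ≤ 0) {E : Type*} [AddCommGroup E] [Module R E] [Module.Finite R E]
    (hE : I ≤ Module.annihilator R E) : IsArtinian R E := by
  have : Ring.KrullDimLE 0 (R ⧸ I) := Ring.krullDimLE_iff.2 hI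
  have h_tors : Module.IsTorsionBySet R E I :=
    (Module.isTorsionBySet_iff_subset_annihilator R E).2 hE
  let := h_tors.module
  have : IsScalarTower R (R ⧸ I) E := h_tors.isScalarTower
  have : Module.Finite (R ⧸ I) E := .of_restrictScalars_finite R _ _
  have : IsArtinianRing (R ⧸ I) := IsNoetherianRing.isArtinianRing_of_krullDimLE_zero
  exact isArtinian_of_surjective_algebraMap (R := R ⧸ I) Ideal.Quotient.mk_surjective

/-- The multiplicative set of elements avoiding all minimal primes of `J`. The localization of a
noetherian ring at it is semilocal, its maximal ideals being the minimal primes of `J`. -/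
def minimalPrimesCompl (J : Ideal R) : Submonoid R where
  carrier := {s | ∀ p ∈ J.minimalPrimes, s ∉ p}
  mul_mem' hx hy _ hp h := (hp.1.1.mem_or_mem h).elim (hx _ hp) (hy _ hp)
  one_mem' _ hp h := hp.1.1.ne_top ((Ideal.eq_top_iff_one _).2 h)

lemma ringKrullDim_quotient_annihilator_le_of_forall_exists_smul_eq_zero {n : ℕ}
    (hJ : ringKrullDim (R ⧸ J) ≤ n + 1) {K : Type*} [AddCommGroup K] [Module R K]
    [Module.Finite R K] (hJK : J ≤ (Module.annihilator R K).radical)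
    (hK : ∀ x : K, ∃ s ∈ minimalPrimesCompl J, s • x = 0) :
    ringKrullDim (R ⧸ Module.annihilator R K) ≤ n := by
  obtain ⟨s, hs, hsK⟩ := exists_mem_annihilator_of_forall_exists_smul_eq_zero hK
  have h_le : J ⊔ Ideal.span {s} ≤ (Module.annihilator R K).radical :=
    sup_le hJK ((Ideal.span_singleton_le_iff_mem _).2 (Ideal.le_radical hsK))
  exact (ringKrullDim_quotient_le_of_le_radical h_le).trans
    (ringKrullDim_quotient_sup_span_singleton_le_of_notMem hJ hs)

section Localization

variable [IsNoetherianRing R]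

lemma exists_comap_le_minimalPrimes {P : Ideal (Localization (minimalPrimesCompl J))}
    (hP : P ≠ ⊤) : ∃ t ∈ J.minimalPrimes, P.comap (algebraMap R _) ≤ t := by
  by_contra! h
  obtain ⟨x, hxP, hx⟩ := exists_mem_forall_notMem_prime
    (Ideal.finite_minimalPrimes_of_isNoetherianRing R J) fun t ht => ⟨ht.1.1, h t ht⟩
  have hxS : x ∈ minimalPrimesCompl J := hx
  exact hP (Ideal.eq_top_of_isUnit_mem P hxP (IsLocalization.map_units _ ⟨x, hxS⟩))

lemma map_le_jacobson_localization_minimalPrimesCompl (J : Ideal R) :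
    J.map (algebraMap R (Localization (minimalPrimesCompl J))) ≤ Ring.jacobson _ := by
  refine le_sInf fun M (hM : IsCoatom M) => ?_
  obtain ⟨t, ht, hMt⟩ := exists_comap_le_minimalPrimes hM.1
  have h_disj : Disjoint (minimalPrimesCompl J : Set R) t :=
    Set.disjoint_left.2 fun s hs hst => hs t ht hst
  have h_prime := IsLocalization.isPrime_of_isPrime_disjoint (minimalPrimesCompl J)
    (Localization (minimalPrimesCompl J)) t ht.1.1 h_disj
  have h_le : M ≤ t.map (algebraMap R _) := by
    rw [← IsLocalization.map_under (minimalPrimesCompl J) _ M]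
    exact Ideal.map_mono hMt
  exact (Ideal.map_mono ht.1.2).trans ((hM.le_iff_eq h_prime.ne_top).1 h_le).le

lemma ringKrullDim_quotient_map_localization_minimalPrimesCompl (J : Ideal R) :
    ringKrullDim (Localization (minimalPrimesCompl J) ⧸
      J.map (algebraMap R (Localization (minimalPrimesCompl J)))) ≤ 0 := by
  rw [ringKrullDim_quotient, Order.krullDim_nonpos_iff_forall_isMax]
  rintro ⟨P, hP⟩ ⟨Q, hQ⟩ (hPQ : P ≤ Q)
  obtain ⟨t, ht, hQt⟩ := exists_comap_le_minimalPrimes Q.2.ne_top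
  have hP_comap : J ≤ P.asIdeal.comap (algebraMap R _) := Ideal.map_le_iff_le_comap.1 hP
  have htP := ht.2 ⟨P.2.comap _, hP_comap⟩ ((Ideal.comap_mono hPQ).trans hQt)
  change Q.asIdeal ≤ P.asIdeal
  rw [← IsLocalization.map_under (minimalPrimesCompl J) _ Q.asIdeal, Ideal.map_le_iff_le_comap]
  exact hQt.trans htP

end Localization

end Dimension

/-! ### Base change of Ext -/

section BaseChange

open TensorProduct

lemma nonempty_linearEquiv_of_exact {S : Type*} [Ring S] {A B C A' B' C' : Type*}
    [AddCommGroup A] [Module S A] [AddCommGroup B] [Module S B] [AddCommGroup C] [Module S C]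
    [AddCommGroup A'] [Module S A'] [AddCommGroup B'] [Module S B'] [AddCommGroup C'] [Module S C']
    {f : A →ₗ[S] B} {g : B →ₗ[S] C} {f' : A' →ₗ[S] B'} {g' : B' →ₗ[S] C'}
    (h : Function.Exact f g) (hg : Function.Surjective g)
    (h' : Function.Exact f' g') (hg' : Function.Surjective g')
    (α : A ≃ₗ[S] A') (β : B ≃ₗ[S] B') (hαβ : β.toLinearMap ∘ₗ f = f' ∘ₗ α.toLinearMap) :
    Nonempty (C ≃ₗ[S] C') := by
  have hker : (LinearMap.ker g).map β.toLinearMap = LinearMap.ker g' := by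
    rw [h.linearMap_ker_eq, h'.linearMap_ker_eq, ← LinearMap.range_comp, hαβ,
      LinearMap.range_comp_of_range_eq_top _ α.range]
  exact ⟨(g.quotKerEquivOfSurjective hg).symm.trans
    ((Submodule.Quotient.equiv _ _ β hker).trans (g'.quotKerEquivOfSurjective hg'))⟩

variable {R : Type u} [CommRing R] (R' : Type u) [CommRing R'] [Algebra R R']

lemma IsPowTorsion.baseChange {X : Type*} [AddCommGroup X] [Module R X] {a : Ideal R}
    (h : IsPowTorsion a X) : IsPowTorsion (a.map (algebraMap R R')) (R' ⊗[R] X) := by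
  intro r hr x
  suffices a.map (algebraMap R R') ≤ (Ideal.torsionOf R' (R' ⊗[R] X) x).radical from this hr
  refine Ideal.map_le_iff_le_comap.2 fun r hr => ?_
  induction x using TensorProduct.induction_on with
  | zero => exact ⟨0, smul_zero _⟩
  | tmul s x =>
    obtain ⟨n, hn⟩ := h r hr x
    refine ⟨n, (Ideal.mem_torsionOf_iff _ _).2 ?_⟩
    rw [← map_pow, algebraMap_smul, ← TensorProduct.tmul_smul, hn, TensorProduct.tmul_zero]
  | add x y hx hy =>
    obtain ⟨n, hn⟩ := hx
    obtain ⟨m, hm⟩ := hy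
    rw [Ideal.mem_torsionOf_iff] at hn hm
    refine ⟨n + m, (Ideal.mem_torsionOf_iff _ _).2 ?_⟩
    rw [smul_add, pow_add, mul_smul, mul_smul, hm, smul_comm, hn, smul_zero, smul_zero, add_zero]

variable [IsNoetherianRing R] [Module.Flat R R']

/-- `Hom` out of a finitely generated module commutes with flat base change. -/
noncomputable def homBaseChangeEquiv (N X : Type*) [AddCommGroup N] [Module R N] [AddCommGroup X]
    [Module R X] [Module.Finite R N] :
    R' ⊗[R] (N →ₗ[R] X) ≃ₗ[R'] (R' ⊗[R] N →ₗ[R'] R' ⊗[R] X) :=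
  have : Module.FinitePresentation R N := Module.finitePresentation_of_finite R N
  (Module.FinitePresentation.isBaseChange_map R N X R').equiv

lemma homBaseChangeEquiv_tmul {N X : Type*} [AddCommGroup N] [Module R N] [AddCommGroup X]
    [Module R X] [Module.Finite R N] (r : R') (h : N →ₗ[R] X) :
    homBaseChangeEquiv R' N X (r ⊗ₜ h) = r • h.baseChange R' := by
  unfold homBaseChangeEquiv
  rw [IsBaseChange.equiv_tmul]
  rfl

namespace ModuleExt

variable (X : Type u) [AddCommGroup X] [Module R X]

theorem nonempty_baseChange_one_equiv {K P N : Type u} [AddCommGroup K] [Module R K]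
    [AddCommGroup P] [Module R P] [AddCommGroup N] [Module R N] [Module.Finite R K]
    [Module.Projective R P] [Module.Finite R P] {f : K →ₗ[R] P} {g : P →ₗ[R] N}
    (hf : Function.Injective f) (hg : Function.Surjective g) (hfg : Function.Exact f g) :
    Nonempty (R' ⊗[R] ModuleExt R N X 1 ≃ₗ[R'] ModuleExt R' (R' ⊗[R] N) (R' ⊗[R] X) 1) := by
  have hf' : Function.Injective (f.baseChange R') :=
    Module.Flat.lTensor_preserves_injective_linearMap f hf
  have hg' : Function.Surjective (g.baseChange R') := LinearMap.lTensor_surjective R' hg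
  have hfg' : Function.Exact (f.baseChange R') (g.baseChange R') := lTensor_exact R' hfg hg
  have exact : Function.Exact (LinearMap.lcomp R X f)
      (contraδ X hf hg hfg 0 ∘ₗ (zeroEquiv K).symm.toLinearMap) :=
    contraδ_zeroEquiv_symm_eq_zero_iff X hf hg hfg
  have exact' : Function.Exact (LinearMap.lcomp R' (R' ⊗[R] X) (f.baseChange R'))
      (contraδ (R' ⊗[R] X) hf' hg' hfg' 0 ∘ₗ (zeroEquiv (R' ⊗[R] K)).symm.toLinearMap) :=
    contraδ_zeroEquiv_symm_eq_zero_iff (R' ⊗[R] X) hf' hg' hfg'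
  have surj : Function.Surjective (contraδ X hf hg hfg 0 ∘ₗ (zeroEquiv K).symm.toLinearMap) :=
    (contraδ_surjective X hf hg hfg 0).comp (zeroEquiv K).symm.surjective
  have surj' : Function.Surjective (contraδ (R' ⊗[R] X) hf' hg' hfg' 0 ∘ₗ
      (zeroEquiv (R' ⊗[R] K)).symm.toLinearMap) :=
    (contraδ_surjective _ hf' hg' hfg' 0).comp (zeroEquiv _).symm.surjective
  refine nonempty_linearEquiv_of_exact (lTensor_exact R' exact surj)
    (A' := R' ⊗[R] P →ₗ[R'] R' ⊗[R] X) (B' := R' ⊗[R] K →ₗ[R'] R' ⊗[R] X)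
    (f := (LinearMap.lcomp R X f).baseChange R')
    (g := (contraδ X hf hg hfg 0 ∘ₗ (zeroEquiv K).symm.toLinearMap).baseChange R')
    (LinearMap.lTensor_surjective R' surj) exact' surj'
    (homBaseChangeEquiv R' P X) (homBaseChangeEquiv R' K X) ?_
  ext h : 3
  simp only [TensorProduct.AlgebraTensorModule.curry_apply, LinearMap.coe_comp,
    LinearEquiv.coe_coe, TensorProduct.curry_apply,
    Function.comp_apply, LinearMap.baseChange_tmul, homBaseChangeEquiv_tmul, one_smul,
    LinearMap.coe_restrictScalars, LinearMap.lcomp_apply', LinearMap.baseChange_comp]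

theorem nonempty_baseChange_equiv (N : Type u) [AddCommGroup N] [Module R N] [Module.Finite R N]
    (i : ℕ) :
    Nonempty (R' ⊗[R] ModuleExt R N X i ≃ₗ[R'] ModuleExt R' (R' ⊗[R] N) (R' ⊗[R] X) i) := by
  induction i generalizing N with
  | zero =>
    exact ⟨((zeroEquiv N).baseChange R R').trans
      ((homBaseChangeEquiv R' N X).trans (zeroEquiv _).symm)⟩
  | succ i ih =>
    obtain ⟨m, g, hg⟩ := Module.Finite.exists_fin' R N
    let f := (LinearMap.ker g).subtype
    have hf : Function.Injective f := Subtype.val_injective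
    have hfg : Function.Exact f g := LinearMap.exact_subtype_ker_map g
    cases i with
    | zero => exact nonempty_baseChange_one_equiv R' X hf hg hfg
    | succ i =>
      have hf' : Function.Injective (f.baseChange R') :=
        Module.Flat.lTensor_preserves_injective_linearMap f hf
      have hg' : Function.Surjective (g.baseChange R') := LinearMap.lTensor_surjective R' hg
      have hfg' : Function.Exact (f.baseChange R') (g.baseChange R') := lTensor_exact R' hfg hg
      obtain ⟨e⟩ := ih (LinearMap.ker g)
      have shift := LinearEquiv.ofBijective (contraδ X hf hg hfg (i + 1))
        ⟨contraδ_succ_injective X hf hg hfg i, contraδ_surjective X hf hg hfg (i + 1)⟩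
      have shift' := LinearEquiv.ofBijective (contraδ (R' ⊗[R] X) hf' hg' hfg' (i + 1))
        ⟨contraδ_succ_injective _ hf' hg' hfg' i, contraδ_surjective _ hf' hg' hfg' (i + 1)⟩
      exact ⟨(shift.baseChange R R').symm.trans (e.trans shift')⟩

theorem nonempty_baseChange_quotient_equiv (a : Ideal R) (i : ℕ) :
    Nonempty (R' ⊗[R] ModuleExt R (R ⧸ a) X i ≃ₗ[R']
      ModuleExt R' (R' ⧸ a.map (algebraMap R R')) (R' ⊗[R] X) i) := by
  obtain ⟨e⟩ := nonempty_baseChange_equiv (R := R) R' X (R ⧸ a) i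
  exact ⟨e.trans (congrLeft _
    (Algebra.TensorProduct.quotIdealMapEquivTensorQuot R' a).symm.toLinearEquiv i)⟩

end ModuleExt

end BaseChange

/-! ### Finiteness of Ext from torsion -/

section MultiplicationByElement

variable {R X : Type u} [CommRing R] [AddCommGroup X] [Module R X]

lemma exact_subtype_ker_rangeRestrict {S M N : Type*} [Ring S] [AddCommGroup M] [Module S M]
    [AddCommGroup N] [Module S N] (f : M →ₗ[S] N) :
    Function.Exact (LinearMap.ker f).subtype f.rangeRestrict :=
  LinearMap.exact_iff.2 (by rw [LinearMap.ker_rangeRestrict, Submodule.range_subtype])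

lemma FiniteUpTo.quotient_range_lsmul_of_localization {S : Submonoid R} (x : R)
    [h : Module.Finite (Localization S) (TensorProduct R (Localization S) X ⧸
      LinearMap.range (LinearMap.lsmul (Localization S) (TensorProduct R (Localization S) X)
        (algebraMap R (Localization S) x)))] :
    FiniteUpTo S (X ⧸ LinearMap.range (LinearMap.lsmul R X x)) := by
  let xX := LinearMap.range (LinearMap.lsmul R X x)
  have h_le : LinearMap.range (LinearMap.lsmul (Localization S) _
      (algebraMap R (Localization S) x)) ≤ LinearMap.ker (xX.mkQ.baseChange (Localization S)) := by
    rintro _ ⟨y, rfl⟩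
    rw [LinearMap.mem_ker, LinearMap.lsmul_apply, map_smul]
    induction xX.mkQ.baseChange (Localization S) y using TensorProduct.induction_on with
    | zero => exact smul_zero _
    | add y z hy hz => rw [smul_add, hy, hz, add_zero]
    | tmul s y =>
      obtain ⟨y, rfl⟩ := xX.mkQ_surjective y
      have hy : x • xX.mkQ y = 0 := (Submodule.Quotient.mk_eq_zero xX).2 ⟨y, rfl⟩
      rw [algebraMap_smul, ← TensorProduct.tmul_smul, hy, TensorProduct.tmul_zero]
  have : Module.Finite (Localization S) (TensorProduct R (Localization S) (X ⧸ xX)) :=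
    .of_surjective (Submodule.liftQ _ _ h_le) fun z => by
      obtain ⟨y, rfl⟩ := LinearMap.lTensor_surjective (Localization S) xX.mkQ_surjective z
      exact ⟨Submodule.Quotient.mk y, rfl⟩
  exact .of_finite_isLocalizedModule (Localization S)
    (TensorProduct.mk R (Localization S) (X ⧸ xX) 1)

variable [IsNoetherianRing R]

namespace ModuleExt

lemma finite_one_ker_lsmul (N : Type u) [AddCommGroup N] [Module R N] (x : R)
    [Module.Finite R (ModuleExt R N X 0)] [Module.Finite R (ModuleExt R N X 1)] :
    Module.Finite R (ModuleExt R N (LinearMap.ker (LinearMap.lsmul R X x)) 1) := by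
  let μ := LinearMap.lsmul R X x
  have : Module.Finite R (ModuleExt R N (LinearMap.range μ) 0) :=
    .of_injective _ (map_zero_injective N (LinearMap.range μ).subtype_injective)
  exact finite_of_exact (exact_δ_map N (LinearMap.ker μ).subtype_injective
    μ.surjective_rangeRestrict (exact_subtype_ker_rangeRestrict μ) 0)

lemma finiteUpTo_quotient_range_lsmul {S : Submonoid R} (N : Type u) [AddCommGroup N]
    [Module R N] (x : R) (i : ℕ) (h₀ : FiniteUpTo S (ModuleExt R N X i))
    (h₁ : FiniteUpTo S (ModuleExt R N X (i + 1)))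
    (h₂ : FiniteUpTo S (ModuleExt R N (LinearMap.ker (LinearMap.lsmul R X x)) (i + 2))) :
    FiniteUpTo S (ModuleExt R N (X ⧸ LinearMap.range (LinearMap.lsmul R X x)) i) := by
  let μ := LinearMap.lsmul R X x
  have h_range : FiniteUpTo S (ModuleExt R N (LinearMap.range μ) (i + 1)) :=
    .of_exact (exact_map_δ N (LinearMap.ker μ).subtype_injective
      μ.surjective_rangeRestrict (exact_subtype_ker_rangeRestrict μ) (i + 1)) h₁ h₂
  exact .of_exact (exact_map_δ N (LinearMap.range μ).subtype_injective
    (LinearMap.range μ).mkQ_surjective (LinearMap.exact_subtype_mkQ _) i) h₀ h_range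

/-
Multiplication by `x` factors through `Ext(N, xX)`, so the kernel of `x` on `Ext(N, X)` maps into
the kernel of `Ext(N, xX) → Ext(N, X)`, which is a quotient of `Ext(N, X / xX)`.
-/
lemma finiteUpTo_ker_lsmul {S : Submonoid R} (N : Type u) [AddCommGroup N] [Module R N] (x : R)
    (hK : ∀ i, FiniteUpTo S (ModuleExt R N (LinearMap.ker (LinearMap.lsmul R X x)) i))
    (hC : ∀ i, FiniteUpTo S (ModuleExt R N (X ⧸ LinearMap.range (LinearMap.lsmul R X x)) i))
    (i : ℕ) : FiniteUpTo S (LinearMap.ker (LinearMap.lsmul R (ModuleExt R N X i) x)) := by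
  let μ := LinearMap.lsmul R X x
  let ι := (LinearMap.range μ).subtype
  have h_map (e : ModuleExt R N X i) : map N ι i (map N μ.rangeRestrict i e) = x • e := by
    rw [map_map, show ι ∘ₗ μ.rangeRestrict = μ from rfl, map_lsmul, LinearMap.lsmul_apply]
  have h_ker : FiniteUpTo S (LinearMap.ker (map N ι i)) := by
    cases i with
    | zero =>
      rw [LinearMap.ker_eq_bot.2 (map_zero_injective N (LinearMap.range μ).subtype_injective)]
      exact .of_finite S
    | succ j =>
      rw [(exact_δ_map N (LinearMap.range μ).subtype_injective (LinearMap.range μ).mkQ_surjective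
        (LinearMap.exact_subtype_mkQ _) j).linearMap_ker_eq]
      exact (hC j).of_surjective (LinearMap.surjective_rangeRestrict _)
  have h_exact := exact_map_map N (LinearMap.ker μ).subtype_injective μ.surjective_rangeRestrict
    (exact_subtype_ker_rangeRestrict μ) i
  let φ : ModuleExt R N (LinearMap.ker μ) i →ₗ[R]
      LinearMap.ker (LinearMap.lsmul R (ModuleExt R N X i) x) :=
    (map N (LinearMap.ker μ).subtype i).codRestrict _ fun e => by
      rw [LinearMap.mem_ker, LinearMap.lsmul_apply, ← h_map, h_exact.apply_apply_eq_zero, map_zero]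
  let ψ : LinearMap.ker (LinearMap.lsmul R (ModuleExt R N X i) x) →ₗ[R]
      LinearMap.ker (map N ι i) :=
    (map N μ.rangeRestrict i).restrict fun e he => by
      rwa [LinearMap.mem_ker, h_map]
  have h_φψ : Function.Exact φ ψ := fun e => by
    rw [Subtype.ext_iff]
    exact (h_exact e.1).trans ⟨fun ⟨k, hk⟩ => ⟨k, Subtype.ext hk⟩,
      fun ⟨k, hk⟩ => ⟨k, congrArg Subtype.val hk⟩⟩
  exact .of_exact h_φψ (hK i) h_ker

lemma finiteUpTo_of_ker_of_quotient_range_lsmul {S : Submonoid R} {N : Type u} [AddCommGroup N]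
    [Module R N] {x : R} (hx : x ∈ Module.annihilator R N)
    (hK : ∀ i, FiniteUpTo S (ModuleExt R N (LinearMap.ker (LinearMap.lsmul R X x)) i))
    (hC : ∀ i, FiniteUpTo S (ModuleExt R N (X ⧸ LinearMap.range (LinearMap.lsmul R X x)) i))
    (i : ℕ) : FiniteUpTo S (ModuleExt R N X i) :=
  (finiteUpTo_ker_lsmul N x hK hC i).of_surjective
    (φ := (LinearMap.ker (LinearMap.lsmul R (ModuleExt R N X i) x)).subtype)
    fun e => ⟨⟨e, Module.mem_annihilator.1 (annihilator_le_annihilator N X i hx) e⟩, rfl⟩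

end ModuleExt

theorem IsPowTorsion.exists_finiteUpTo_quotient_range_lsmul {a J b : Ideal R} (haJ : a ≤ J)
    (hX : IsPowTorsion J X) (hfin : Module.Finite R (Submodule.torsionBySet R X (a : Set R)))
    (hb : ¬ a ≤ b.radical) :
    ∃ x ∈ a, x ∉ b ∧ FiniteUpTo (minimalPrimesCompl J)
      (X ⧸ LinearMap.range (LinearMap.lsmul R X x)) := by
  let R' := Localization (minimalPrimesCompl J)
  let X' := TensorProduct R R' X
  let a' := a.map (algebraMap R R')
  have : IsNoetherianRing R' := IsLocalization.isNoetherianRing (minimalPrimesCompl J) R' ‹_›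
  have hX' : IsPowTorsion (J.map (algebraMap R R')) X' := hX.baseChange R'
  have hfin' : Module.Finite R' (Submodule.torsionBySet R' X' (a' : Set R')) := by
    obtain ⟨e⟩ := ModuleExt.nonempty_baseChange_quotient_equiv R' X a 0
    exact .equiv (((ModuleExt.zeroEquivTorsionBySet a X).symm.baseChange R R').trans
      (e.trans (ModuleExt.zeroEquivTorsionBySet a' X')))
  have : IsArtinian R' X' := by
    refine (hX'.mono (Ideal.map_mono haJ)).isArtinian (IsNoetherian.noetherian a') ?_
    exact isArtinian_of_ringKrullDim_quotient_le_zero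
      ((ringKrullDim_quotient_le_of_le_radical (hX'.submodule _).le_radical_annihilator).trans
        (ringKrullDim_quotient_map_localization_minimalPrimesCompl J)) le_rfl
  obtain ⟨T, hT, hT_prime, hT_fin⟩ := exists_finite_primes_quotient_range_lsmul_finite hfin'
  obtain ⟨q, ⟨hbq, hq⟩, haq⟩ : ∃ q ∈ {q : Ideal R | b ≤ q ∧ q.IsPrime}, ¬ a ≤ q := by
    rw [Ideal.radical_eq_sInf, le_sInf_iff] at hb
    push Not at hb
    exact hb
  obtain ⟨x, hxa, hx⟩ := exists_mem_forall_notMem_prime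
    ((hT.image (Ideal.comap (algebraMap R R'))).insert q) (by
      rintro _ (rfl | ⟨p, hp, rfl⟩)
      · exact ⟨hq, haq⟩
      · exact ⟨(hT_prime p hp).1.comap _, mt Ideal.map_le_iff_le_comap.2 (hT_prime p hp).2⟩)
  have := hT_fin (algebraMap R R' x) fun p hp => hx _ (.inr ⟨p, hp, rfl⟩)
  exact ⟨x, hxa, fun hxb => hx q (.inl rfl) (hbq hxb), .quotient_range_lsmul_of_localization x⟩

-- The induction is on the annihilator of `X`, which grows strictly when `X` is replaced by the
-- kernel of an `x` outside it.
theorem IsPowTorsion.ker_lsmul_induction {a J : Ideal R} (haJ : a ≤ J)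
    {P : ∀ (X : Type u) [AddCommGroup X] [Module R X], Prop}
    (finite : ∀ (X : Type u) [AddCommGroup X] [Module R X] [Module.Finite R X], P X)
    (ker_lsmul : ∀ (X : Type u) [AddCommGroup X] [Module R X]
      [Module.Finite R (ModuleExt R (R ⧸ a) X 0)] [Module.Finite R (ModuleExt R (R ⧸ a) X 1)],
      IsPowTorsion J X → ∀ x ∈ a,
      FiniteUpTo (minimalPrimesCompl J) (X ⧸ LinearMap.range (LinearMap.lsmul R X x)) →
      P (LinearMap.ker (LinearMap.lsmul R X x)) → P X)
    (X : Type u) [AddCommGroup X] [Module R X] [Module.Finite R (ModuleExt R (R ⧸ a) X 0)]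
    [Module.Finite R (ModuleExt R (R ⧸ a) X 1)] (hX : IsPowTorsion J X) : P X := by
  induction hb : Module.annihilator R X using WellFoundedGT.induction generalizing X with
  | _ b ih =>
  have hfin : Module.Finite R (Submodule.torsionBySet R X (a : Set R)) :=
    .equiv (ModuleExt.zeroEquivTorsionBySet a X)
  by_cases hab : a ≤ b.radical
  · obtain ⟨k, hk⟩ := Ideal.exists_pow_le_of_le_radical_of_fg hab (IsNoetherian.noetherian a)
    have := finite_of_pow_le_annihilator k (hk.trans hb.ge) hfin
    exact finite X
  obtain ⟨x, hxa, hxb, hC⟩ := hX.exists_finiteUpTo_quotient_range_lsmul haJ hfin hab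
  let K := LinearMap.ker (LinearMap.lsmul R X x)
  have hbK : b < Module.annihilator R K := by
    refine lt_of_le_of_ne (hb ▸ K.subtype.annihilator_le_of_injective K.subtype_injective) ?_
    rintro rfl
    exact hxb (Module.mem_annihilator.2 fun y => Subtype.ext y.2)
  have : Module.Finite R (ModuleExt R (R ⧸ a) K 0) :=
    .of_injective _ (ModuleExt.map_zero_injective _ K.subtype_injective)
  have : Module.Finite R (ModuleExt R (R ⧸ a) K 1) := ModuleExt.finite_one_ker_lsmul _ x
  exact ker_lsmul X hX x hxa hC (ih _ hbK K (hX.submodule K) rfl)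

end MultiplicationByElement

section FinitenessOfExt

variable {R X : Type u} [CommRing R] [IsNoetherianRing R] [AddCommGroup X] [Module R X]
  {a J : Ideal R}

namespace ModuleExt

theorem finite_of_finiteUpTo_minimalPrimesCompl (haJ : a ≤ J) (hJ : ringKrullDim (R ⧸ J) ≤ 1)
    (hX : IsPowTorsion J X) (hfin : FiniteUpTo (minimalPrimesCompl J) X)
    [Module.Finite R (ModuleExt R (R ⧸ a) X 0)] (i : ℕ) :
    Module.Finite R (ModuleExt R (R ⧸ a) X i) := by
  obtain ⟨L, hL, hLS⟩ := hfin
  have : Module.Finite R L := Module.Finite.iff_fg.2 hL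
  have : Module.Finite R (ModuleExt R (R ⧸ a) (X ⧸ L) 0) :=
    finite_of_exact (exact_map_δ (R ⧸ a) L.subtype_injective L.mkQ_surjective
      (LinearMap.exact_subtype_mkQ L) 0)
  let K := Submodule.torsionBySet R (X ⧸ L) (a : Set R)
  have : Module.Finite R K := .equiv (zeroEquivTorsionBySet a (X ⧸ L))
  have hK_dim : ringKrullDim (R ⧸ Module.annihilator R K) ≤ (0 : ℕ) :=
    ringKrullDim_quotient_annihilator_le_of_forall_exists_smul_eq_zero (by simpa using hJ)
      ((hX.quotient L).submodule K).le_radical_annihilator fun ⟨z, _⟩ => by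
        obtain ⟨x, rfl⟩ := L.mkQ_surjective z
        obtain ⟨s, hs, hsx⟩ := hLS x
        exact ⟨s, hs, Subtype.ext ((Submodule.Quotient.mk_eq_zero L).2 hsx)⟩
  have : IsArtinian R (X ⧸ L) :=
    ((hX.quotient L).mono haJ).isArtinian (IsNoetherian.noetherian a)
      (isArtinian_of_ringKrullDim_quotient_le_zero hK_dim le_rfl)
  have : Module.Finite R (ModuleExt R (R ⧸ a) (X ⧸ L) i) := finite_of_isArtinian ‹_› i
  exact finite_of_exact (exact_map_map (R ⧸ a) L.subtype_injective L.mkQ_surjective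
    (LinearMap.exact_subtype_mkQ L) i)

theorem finite_of_ringKrullDim_quotient_le_one (haJ : a ≤ J) (hJ : ringKrullDim (R ⧸ J) ≤ 1)
    (hX : IsPowTorsion J X) [Module.Finite R (ModuleExt R (R ⧸ a) X 0)]
    [Module.Finite R (ModuleExt R (R ⧸ a) X 1)] (i : ℕ) :
    Module.Finite R (ModuleExt R (R ⧸ a) X i) := by
  refine hX.ker_lsmul_induction haJ (P := fun X _ _ => ∀ i, Module.Finite R
    (ModuleExt R (R ⧸ a) X i)) (fun X _ _ _ => inferInstance) ?_ X i
  intro X _ _ _ _ hX x hx hC hK i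
  have : Module.Finite R
      (ModuleExt R (R ⧸ a) (X ⧸ LinearMap.range (LinearMap.lsmul R X x)) 0) :=
    (finiteUpTo_quotient_range_lsmul _ x 0 (.of_finite ⊥) (.of_finite ⊥) (.of_finite ⊥)).finite
  have := finite_of_finiteUpTo_minimalPrimesCompl haJ hJ (hX.quotient _) hC
  exact (finiteUpTo_of_ker_of_quotient_range_lsmul (by rwa [Ideal.annihilator_quotient])
    (fun _ => .of_finite ⊥) (fun _ => .of_finite ⊥) i).finite

theorem exists_finiteUpTo_powers_of_finiteUpTo {S : Submonoid R} {f : R}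
    (hX : IsPowTorsion a X) (hfin : FiniteUpTo S X)
    (h₀ : FiniteUpTo (Submonoid.powers f) (ModuleExt R (R ⧸ a) X 0)) :
    ∃ s ∈ S, ∀ i, FiniteUpTo (Submonoid.powers (s * f)) (ModuleExt R (R ⧸ a) X i) := by
  obtain ⟨L, hL, hLS⟩ := hfin
  have : Module.Finite R L := Module.Finite.iff_fg.2 hL
  have hZ : FiniteUpTo (Submonoid.powers f) (ModuleExt R (R ⧸ a) (X ⧸ L) 0) :=
    .of_exact (exact_map_δ (R ⧸ a) L.subtype_injective L.mkQ_surjective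
      (LinearMap.exact_subtype_mkQ L) 0) h₀ (.of_finite _)
  obtain ⟨M, hM, hMf⟩ := hZ.of_surjective (zeroEquivTorsionBySet a (X ⧸ L)).surjective
  have : Module.Finite R M := Module.Finite.iff_fg.2 hM
  obtain ⟨s, hs, hsM⟩ := exists_mem_annihilator_of_forall_exists_smul_eq_zero (S := S) (X := M)
    fun ⟨⟨z, _⟩, _⟩ => by
      obtain ⟨x, rfl⟩ := L.mkQ_surjective z
      obtain ⟨s, hs, hsx⟩ := hLS x
      exact ⟨s, hs, Subtype.ext (Subtype.ext ((Submodule.Quotient.mk_eq_zero L).2 hsx))⟩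
  refine ⟨s, hs, fun i => ?_⟩
  have h_tors : IsPowTorsion (Ideal.span {s * f}) (X ⧸ L) := .span_singleton fun z => by
    suffices ∃ t ∈ Submonoid.powers (s * f), t • z = 0 by
      obtain ⟨_, ⟨n, rfl⟩, hn⟩ := this
      exact ⟨n, hn⟩
    refine (hX.quotient L).exists_smul_eq_zero_of_torsionBySet (IsNoetherian.noetherian a) ?_ z
    intro z hz
    obtain ⟨_, ⟨n, rfl⟩, hn⟩ := hMf ⟨z, hz⟩
    have hsz : s • f ^ n • z = 0 :=
      congrArg (fun w : M => (w : X ⧸ L)) (Module.mem_annihilator.1 hsM ⟨_, hn⟩)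
    exact ⟨(s * f) ^ (n + 1), ⟨n + 1, rfl⟩, by
      rw [show (s * f) ^ (n + 1) = (s ^ n * f) * (s * f ^ n) by ring, mul_smul, mul_smul s, hsz,
        smul_zero]⟩
  refine .of_exact (exact_map_map (R ⧸ a) L.subtype_injective L.mkQ_surjective
    (LinearMap.exact_subtype_mkQ L) i) (.of_finite _) (.of_torsion fun e => ?_)
  obtain ⟨n, hn⟩ := isPowTorsion (R ⧸ a) h_tors i _ (Ideal.mem_span_singleton_self _) e
  exact ⟨_, ⟨n, rfl⟩, hn⟩

theorem exists_finiteUpTo_powers (hX : IsPowTorsion a X)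
    [Module.Finite R (ModuleExt R (R ⧸ a) X 0)] [Module.Finite R (ModuleExt R (R ⧸ a) X 1)] :
    ∃ f ∈ minimalPrimesCompl a, ∀ i,
      FiniteUpTo (Submonoid.powers f) (ModuleExt R (R ⧸ a) X i) := by
  refine hX.ker_lsmul_induction le_rfl (P := fun X _ _ => ∃ f ∈ minimalPrimesCompl a, ∀ i,
      FiniteUpTo (Submonoid.powers f) (ModuleExt R (R ⧸ a) X i))
    (fun X _ _ _ => ⟨1, one_mem _, fun i => .of_finite _⟩) ?_ X
  rintro X _ _ _ _ hX x hx hC ⟨f, hf, hK⟩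
  obtain ⟨s, hs, hC⟩ := exists_finiteUpTo_powers_of_finiteUpTo (hX.quotient _) hC
    (finiteUpTo_quotient_range_lsmul _ x 0 (.of_finite _) (.of_finite _) (hK 2))
  exact ⟨s * f, mul_mem hs hf, finiteUpTo_of_ker_of_quotient_range_lsmul
    (by rwa [Ideal.annihilator_quotient]) (fun i => (hK i).powers_mul s) hC⟩

end ModuleExt

end FinitenessOfExt

/-! ### Adic completion -/

section Completion

lemma isPrecomplete_of_finite {R M : Type*} [CommRing R] [AddCommGroup M] [Module R M] (I : Ideal R)
    [IsPrecomplete I R] [Module.Finite R M] : IsPrecomplete I M := by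
  refine AdicCompletion.of_surjective_iff.1 fun y => ?_
  obtain ⟨t, rfl⟩ := AdicCompletion.ofTensorProduct_surjective_of_finite I M y
  induction t with
  | zero => exact ⟨0, by rw [map_zero, map_zero]⟩
  | add t₁ t₂ h₁ h₂ =>
    obtain ⟨⟨x₁, hx₁⟩, x₂, hx₂⟩ := h₁, h₂
    exact ⟨x₁ + x₂, by rw [map_add, map_add, hx₁, hx₂]⟩
  | tmul r m =>
    obtain ⟨r, rfl⟩ := AdicCompletion.of_surjective I R r
    refine ⟨r • m, ?_⟩
    rw [AdicCompletion.ofTensorProduct_tmul, map_smul]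
    exact (algebraMap_smul (AdicCompletion I R) r (AdicCompletion.of I M m)).symm

variable {S : Type*} [CommRing S] {I : Ideal S}

lemma finite_of_isPrecomplete_of_isHausdorff {M : Type*} [AddCommGroup M] [Module S M]
    [IsPrecomplete I S] [IsHausdorff I M] [Module.Finite S (M ⧸ (I • ⊤ : Submodule S M))] :
    Module.Finite S M := by
  obtain ⟨k, g, hg⟩ := Module.Finite.exists_fin' S (M ⧸ (I • ⊤ : Submodule S M))
  obtain ⟨φ, hφ⟩ := Module.projective_lifting_property (I • ⊤ : Submodule S M).mkQ g
    (I • ⊤ : Submodule S M).mkQ_surjective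
  have := isPrecomplete_of_finite (M := Fin k → S) I
  exact .of_surjective φ (surjective_of_mkQ_comp_surjective (I := I) (by rwa [hφ]))

lemma finite_of_isPrecomplete_span_singleton {f : S} {M V : Type*} [AddCommGroup M] [Module S M]
    [AddCommGroup V] [Module S V] [IsPrecomplete (Ideal.span {f}) S]
    [IsHausdorff (Ideal.span {f}) M] [IsNoetherian S V] (φ : M →ₗ[S] V)
    (hφ : ∀ m, φ m = 0 → ∃ m', f • m' = m) : Module.Finite S M := by
  have h_le : LinearMap.ker φ ≤ Ideal.span {f} • (⊤ : Submodule S M) := fun m hm => by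
    obtain ⟨m', rfl⟩ := hφ m hm
    exact Submodule.smul_mem_smul (Ideal.mem_span_singleton_self f) trivial
  have : Module.Finite S (M ⧸ LinearMap.ker φ) := .equiv φ.quotKerEquivRange.symm
  have : Module.Finite S (M ⧸ (Ideal.span {f} • ⊤ : Submodule S M)) :=
    .of_surjective (Submodule.factor h_le) (Submodule.factor_surjective h_le)
  exact finite_of_isPrecomplete_of_isHausdorff (I := Ideal.span {f})

lemma isNoetherianRing_of_isAdicComplete_span_singleton {f : S}
    [hS : IsAdicComplete (Ideal.span {f}) S] [hq : IsNoetherian S (S ⧸ Ideal.span {f})] :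
    IsNoetherianRing S := by
  refine IsNoetherianRing.of_prime fun P hP => ?_
  by_cases hf : f ∈ P
  · refine Submodule.fg_of_fg_map_of_fg_inf_ker (Ideal.span {f}).mkQ (IsNoetherian.noetherian _) ?_
    rw [Submodule.ker_mkQ, inf_eq_right.2 ((Ideal.span_singleton_le_iff_mem _).2 hf)]
    exact Submodule.fg_span_singleton f
  · have : IsHausdorff (Ideal.span {f}) P := ⟨fun m hm => Subtype.ext <|
      hS.toIsHausdorff.haus _ fun n => (SModEq.map (hm n) P.subtype).mono <| by
        rw [Submodule.map_smul'']
        exact Submodule.smul_mono le_rfl le_top⟩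
    refine Module.Finite.iff_fg.1 (finite_of_isPrecomplete_span_singleton (f := f)
      ((Ideal.span {f}).mkQ ∘ₗ P.subtype) fun m hm => ?_)
    obtain ⟨y, hy⟩ := Ideal.mem_span_singleton.1 ((Submodule.Quotient.mk_eq_zero _).1 hm)
    exact ⟨⟨y, (hP.mem_or_mem (hy ▸ m.2 : f * y ∈ P)).resolve_left hf⟩, Subtype.ext hy.symm⟩

variable {R : Type*} [CommRing R] [IsNoetherianRing R]

lemma quotient_mk_comp_algebraMap_adicCompletion_surjective {a : Ideal R}
    {J : Ideal (AdicCompletion a R)} (hJ : a.map (algebraMap R _) ≤ J) :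
    Function.Surjective ((Ideal.Quotient.mk J).comp (algebraMap R (AdicCompletion a R))) := by
  intro y
  obtain ⟨x, rfl⟩ := Ideal.Quotient.mk_surjective y
  obtain ⟨r, hr⟩ := Ideal.Quotient.mk_surjective (AdicCompletion.evalOneₐ a x)
  refine ⟨r, Ideal.Quotient.eq.2 (hJ ?_)⟩
  rw [← AdicCompletion.ker_evalOneₐ_eq_map a (IsNoetherian.noetherian a), RingHom.mem_ker,
    map_sub, sub_eq_zero]
  exact hr

lemma ringKrullDim_quotient_map_adicCompletion_le {a I : Ideal R} (ha : a ≤ I) :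
    ringKrullDim (AdicCompletion a R ⧸ I.map (algebraMap R (AdicCompletion a R))) ≤
      ringKrullDim (R ⧸ I) := by
  refine ringKrullDim_le_of_surjective (Ideal.Quotient.lift I ((Ideal.Quotient.mk _).comp
    (algebraMap R (AdicCompletion a R))) fun r hr => Ideal.Quotient.eq_zero_iff_mem.2
      (Ideal.mem_map_of_mem _ hr)) (Ideal.Quotient.lift_surjective_of_surjective _ _ ?_)
  exact quotient_mk_comp_algebraMap_adicCompletion_surjective (Ideal.map_mono ha)

instance isAdicComplete_adicCompletion_span_singleton (f : R) :
    IsAdicComplete (Ideal.span {algebraMap R (AdicCompletion (Ideal.span {f}) R) f})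
      (AdicCompletion (Ideal.span {f}) R) := by
  rw [← Set.image_singleton, ← Ideal.map_span]
  exact AdicCompletion.isAdicComplete_self _ (Submodule.fg_span_singleton f)

instance isNoetherianRing_adicCompletion_span_singleton (f : R) :
    IsNoetherianRing (AdicCompletion (Ideal.span {f}) R) := by
  let R' := AdicCompletion (Ideal.span {f}) R
  let I := Ideal.span {algebraMap R R' f}
  have h_surj : Function.Surjective (algebraMap R (R' ⧸ I)) := by
    refine quotient_mk_comp_algebraMap_adicCompletion_surjective ?_
    rw [Ideal.map_span, Set.image_singleton]
  have : IsNoetherian R (R' ⧸ I) :=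
    isNoetherian_of_surjective (Algebra.linearMap R (R' ⧸ I))
      (LinearMap.range_eq_top.2 h_surj)
  have : IsNoetherian R' (R' ⧸ I) := isNoetherian_of_tower R this
  exact isNoetherianRing_of_isAdicComplete_span_singleton (f := algebraMap R R' f)

lemma IsPowTorsion.mk_one_injective {X : Type*} [AddCommGroup X] [Module R X] {a : Ideal R}
    (hX : IsPowTorsion a X) :
    Function.Injective (TensorProduct.mk R (AdicCompletion a R) X 1) := by
  refine (injective_iff_map_eq_zero _).2 fun x hx => ?_
  let L := Submodule.span R {x}
  let x' : L := ⟨x, Submodule.mem_span_singleton_self x⟩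
  have hx' : (1 : AdicCompletion a R) ⊗ₜ[R] x' = 0 :=
    Module.Flat.lTensor_preserves_injective_linearMap L.subtype L.subtype_injective
      (hx.trans (map_zero _).symm)
  obtain ⟨n, hn⟩ := hX.exists_pow_le_torsionOf (IsNoetherian.noetherian a) x
  have h_bot : a ^ n • (⊤ : Submodule R L) = ⊥ := by
    refine le_bot_iff.1 (Submodule.smul_le.2 fun r hr y _ => Subtype.ext ?_)
    obtain ⟨c, hc⟩ := Submodule.mem_span_singleton.1 y.2
    change r • (y : X) = 0
    rw [← hc, smul_comm, (Ideal.mem_torsionOf_iff _ _).1 (hn hr), smul_zero]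
  have : IsHausdorff a L := ⟨fun y hy => by simpa [h_bot] using hy n⟩
  have h_of : AdicCompletion.of a L x' = 0 := by
    rw [← one_smul (AdicCompletion a R) (AdicCompletion.of a L x'),
      ← AdicCompletion.ofTensorProduct_tmul, hx', map_zero]
  exact congrArg Subtype.val (AdicCompletion.of_injective a L (h_of.trans (map_zero _).symm))

end Completion

/-! ### Tate modules -/

section TateModule

open scoped Pointwise

variable {S : Type*} [CommRing S]

/-- The Tate module of `F` at `f`: the limit of the kernels of the powers of `f` on `F` along
multiplication by `f`. An element is encoded by its sequence of components, whose `n`-th term is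
killed by `f ^ (n + 1)`. -/
def tateModule (f : S) (F : Type*) [AddCommGroup F] [Module S F] : Submodule S (ℕ → F) where
  carrier := {τ | f • τ 0 = 0 ∧ ∀ n, f • τ (n + 1) = τ n}
  add_mem' hσ hτ := ⟨by rw [Pi.add_apply, smul_add, hσ.1, hτ.1, add_zero],
    fun n => by rw [Pi.add_apply, smul_add, hσ.2, hτ.2, Pi.add_apply]⟩
  zero_mem' := ⟨smul_zero f, fun _ => smul_zero f⟩
  smul_mem' r τ hτ := ⟨by rw [Pi.smul_apply, smul_comm, hτ.1, smul_zero],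
    fun n => by rw [Pi.smul_apply, smul_comm, hτ.2, Pi.smul_apply]⟩

variable {f : S} {F : Type*} [AddCommGroup F] [Module S F]

namespace tateModule

lemma pow_smul_apply_add {τ : ℕ → F} (hτ : τ ∈ tateModule f F) (n k : ℕ) :
    f ^ k • τ (n + k) = τ n := by
  induction k with
  | zero => rw [pow_zero, one_smul, add_zero]
  | succ k ih => rw [pow_succ, mul_smul, ← add_assoc, hτ.2, ih]

lemma pow_smul_apply {τ : ℕ → F} (hτ : τ ∈ tateModule f F) (n : ℕ) : f ^ (n + 1) • τ n = 0 := by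
  rw [pow_succ', mul_smul]
  simpa only [zero_add, hτ.1] using congrArg (f • ·) (pow_smul_apply_add hτ 0 n)

instance isHausdorff : IsHausdorff (Ideal.span {f}) (tateModule f F) where
  haus' τ hτ := Subtype.ext <| funext fun n => by
    have h_mem := SModEq.zero.1 (hτ (n + 1))
    rw [Ideal.span_singleton_pow, Submodule.ideal_span_singleton_smul] at h_mem
    obtain ⟨σ, -, rfl⟩ := (Submodule.mem_smul_pointwise_iff_exists _ _ _).1 h_mem
    exact pow_smul_apply σ.2 n

/-- The projection of the Tate module to its component of index `0`. -/
def proj (f : S) (F : Type*) [AddCommGroup F] [Module S F] :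
    tateModule f F →ₗ[S] LinearMap.ker (LinearMap.lsmul S F f) :=
  (LinearMap.proj 0 ∘ₗ (tateModule f F).subtype).codRestrict _ fun τ => τ.2.1

lemma exists_smul_eq_of_proj_eq_zero {τ : tateModule f F} (hτ : proj f F τ = 0) :
    ∃ σ, f • σ = τ :=
  ⟨⟨fun n => τ.1 (n + 1), (τ.2.2 0).trans (congrArg Subtype.val hτ), fun n => τ.2.2 (n + 1)⟩,
    Subtype.ext (funext τ.2.2)⟩

lemma finite [IsNoetherianRing S] [IsPrecomplete (Ideal.span {f}) S]
    [Module.Finite S (LinearMap.ker (LinearMap.lsmul S F f))] :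
    Module.Finite S (tateModule f F) :=
  finite_of_isPrecomplete_span_singleton (proj f F) fun _ => exists_smul_eq_of_proj_eq_zero

lemma ringKrullDim_quotient_annihilator_le [IsNoetherianRing S] [Module.Finite S (tateModule f F)]
    [Module.Finite S (LinearMap.ker (LinearMap.lsmul S F f))] (hf : f ∈ Ring.jacobson S) :
    ringKrullDim (S ⧸ Module.annihilator S (tateModule f F)) ≤
      ringKrullDim (S ⧸ Module.annihilator S (LinearMap.ker (LinearMap.lsmul S F f))) + 1 := by
  have h_ker : LinearMap.ker (proj f F) = f • ⊤ := by
    ext τ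
    rw [LinearMap.mem_ker, Submodule.mem_smul_pointwise_iff_exists]
    refine ⟨fun hτ => ?_, ?_⟩
    · obtain ⟨σ, rfl⟩ := exists_smul_eq_of_proj_eq_zero hτ
      exact ⟨σ, trivial, rfl⟩
    · rintro ⟨σ, -, rfl⟩
      exact Subtype.ext σ.2.1
  have h_inj : Function.Injective
      ((f • ⊤ : Submodule S (tateModule f F)).liftQ (proj f F) h_ker.ge) :=
    LinearMap.ker_eq_bot.1 (Submodule.ker_liftQ_eq_bot _ _ _ h_ker.le)
  rw [← Module.supportDim_eq_ringKrullDim_quotient_annihilator,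
    ← Module.supportDim_eq_ringKrullDim_quotient_annihilator]
  rw [← Ideal.jacobson_bot] at hf
  exact (Module.supportDim_le_supportDim_quotSMulTop_succ_of_mem_jacobson
    (Ideal.jacobson_mono bot_le hf)).trans
      (add_le_add_left (Module.supportDim_le_of_injective _ h_inj) 1)

theorem eq_bot_of_ringKrullDim_quotient_le [IsNoetherianRing S]
    [IsAdicComplete (Ideal.span {f}) S] {b : Ideal S}
    (hb : ringKrullDim (S ⧸ b ⊔ Ideal.span {f}) ≤ 1) (hF : IsPowTorsion (Ideal.span {f}) F)
    (hf : ringKrullDim (S ⧸ Module.annihilator S (LinearMap.ker (LinearMap.lsmul S F f))) ≤ 0)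
    (hfin : ∀ z, ringKrullDim (S ⧸ b ⊔ Ideal.span {z}) ≤ 1 →
      Module.Finite S (LinearMap.ker (LinearMap.lsmul S F z))) :
    tateModule f F = ⊥ := by
  have hf_jac : f ∈ Ring.jacobson S := by
    rw [← Ideal.jacobson_bot]
    exact IsAdicComplete.le_jacobson_bot _ (Ideal.mem_span_singleton_self f)
  have := hfin f hb
  have : Module.Finite S (tateModule f F) := finite
  let I := Module.annihilator S (tateModule f F)
  have hI : ringKrullDim (S ⧸ I) ≤ (1 : ℕ) :=
    (ringKrullDim_quotient_annihilator_le hf_jac).trans (add_le_add_left hf 1)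
  have hb₂ : ringKrullDim (S ⧸ b) ≤ (1 : ℕ) + 1 :=
    (ringKrullDim_quotient_le_add_one_of_mem_jacobson hf_jac).trans (add_le_add_left hb 1)
  obtain ⟨z, hzI, hz⟩ := exists_mem_forall_notMem_prime (a := I)
    (T := {p ∈ b.minimalPrimes | ¬ I ≤ p})
    ((Ideal.finite_minimalPrimes_of_isNoetherianRing S b).subset fun p hp => hp.1)
    fun p hp => ⟨hp.1.1.1, hp.2⟩
  have := hfin z (ringKrullDim_quotient_sup_span_singleton_le hb₂ hI fun p hp hIp => hz p ⟨hp, hIp⟩)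
  obtain ⟨_, ⟨N, rfl⟩, hN⟩ := exists_mem_annihilator_of_forall_exists_smul_eq_zero
    (S := Submonoid.powers f) (X := LinearMap.ker (LinearMap.lsmul S F z)) fun x => by
      obtain ⟨n, hn⟩ := hF f (Ideal.mem_span_singleton_self f) x
      exact ⟨f ^ n, ⟨n, rfl⟩, Subtype.ext hn⟩
  refine (Submodule.eq_bot_iff _).2 fun τ hτ => funext fun n => ?_
  have hz_apply : z • τ (n + N) = 0 :=
    congrFun (congrArg Subtype.val (Module.mem_annihilator.1 hzI ⟨τ, hτ⟩)) (n + N)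
  rw [← pow_smul_apply_add hτ n N]
  exact congrArg Subtype.val (Module.mem_annihilator.1 hN ⟨τ (n + N), hz_apply⟩)

lemma eq_bot_of_injective {S' F' : Type*} [CommRing S'] [Algebra S S'] [AddCommGroup F']
    [Module S F'] [Module S' F'] [IsScalarTower S S' F'] {g : F →ₗ[S] F'}
    (hg : Function.Injective g) (h : tateModule (algebraMap S S' f) F' = ⊥) :
    tateModule f F = ⊥ := by
  refine (Submodule.eq_bot_iff _).2 fun τ hτ => ?_
  have h_mem : g ∘ τ ∈ tateModule (algebraMap S S' f) F' :=
    ⟨by rw [algebraMap_smul, Function.comp_apply, ← map_smul, hτ.1, map_zero],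
      fun n => by rw [algebraMap_smul, Function.comp_apply, ← map_smul, hτ.2, Function.comp_apply]⟩
  rw [h, Submodule.mem_bot] at h_mem
  exact funext fun n => hg ((congrFun h_mem n).trans (map_zero g).symm)

lemma exists_apply_zero_eq_of_divisible {N : Submodule S F} (hN : ∀ x ∈ N, ∃ y ∈ N, f • y = x)
    {x : F} (hx : x ∈ N) (hfx : f • x = 0) : ∃ τ ∈ tateModule f F, τ 0 = x := by
  choose! g hgN hg using hN
  have h_mem (n : ℕ) : g^[n] x ∈ N := by
    induction n with
    | zero => exact hx
    | succ n ih => exact Function.iterate_succ_apply' g n x ▸ hgN _ ih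
  exact ⟨fun n => g^[n] x,
    ⟨hfx, fun n => (congrArg (f • ·) (g.iterate_succ_apply' n x)).trans (hg _ (h_mem n))⟩, rfl⟩

theorem finite_of_eq_bot [IsNoetherianRing S] [IsArtinian S F]
    [Module.Finite S (LinearMap.ker (LinearMap.lsmul S F f))]
    (hF : IsPowTorsion (Ideal.span {f}) F) (h : tateModule f F = ⊥) : Module.Finite S F := by
  obtain ⟨k, hk⟩ := IsArtinian.range_smul_pow_stabilizes F f
  let N := LinearMap.range (f ^ k • (LinearMap.id : F →ₗ[S] F))
  have hN_div : ∀ x ∈ N, ∃ y ∈ N, f • y = x := fun x hx => by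
    obtain ⟨y, rfl⟩ := (hk (k + 1) k.le_succ).le hx
    exact ⟨f ^ k • y, ⟨y, rfl⟩, by rw [smul_smul, ← pow_succ']; rfl⟩
  have hN_zero (n : ℕ) : ∀ x ∈ N, f ^ n • x = 0 → x = 0 := by
    induction n with
    | zero => exact fun x _ hx => by rwa [pow_zero, one_smul] at hx
    | succ n ih =>
      intro x hx hx_pow
      have hfx : f • x = 0 := ih _ (N.smul_mem f hx) (by rwa [smul_smul, ← pow_succ])
      obtain ⟨τ, hτ, rfl⟩ := exists_apply_zero_eq_of_divisible hN_div hx hfx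
      rw [h, Submodule.mem_bot] at hτ
      exact congrFun hτ 0
  have h_ann : f ^ k ∈ Module.annihilator S F := Module.mem_annihilator.2 fun x => by
    obtain ⟨n, hn⟩ := hF f (Ideal.mem_span_singleton_self f) (f ^ k • x)
    exact hN_zero n _ ⟨x, rfl⟩ hn
  refine finite_of_pow_le_annihilator (a := Ideal.span {f}) k ?_ ?_
  · rwa [Ideal.span_singleton_pow, Ideal.span_singleton_le_iff_mem]
  · rwa [Submodule.torsionBySet_span_singleton_eq]

end tateModule

end TateModule

/-! ### Finiteness of Ext in dimension two -/

section DimensionTwo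

open TensorProduct

variable {R : Type u} [CommRing R]

lemma map_annihilator_ker_lsmul_le (R' : Type*) [CommRing R'] [Algebra R R'] [Module.Flat R R']
    (F : Type*) [AddCommGroup F] [Module R F] (f : R) :
    (Module.annihilator R (LinearMap.ker (LinearMap.lsmul R F f))).map (algebraMap R R') ≤
      Module.annihilator R'
        (LinearMap.ker (LinearMap.lsmul R' (R' ⊗[R] F) (algebraMap R R' f))) := by
  let K := LinearMap.ker (LinearMap.lsmul R F f)
  refine Ideal.map_le_iff_le_comap.2 fun r hr => Module.mem_annihilator.2 fun ⟨y, hy⟩ =>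
    Subtype.ext ?_
  have hfy : (LinearMap.lsmul R F f).lTensor R' y = 0 := by
    have h_eq : (LinearMap.lsmul R F f).lTensor R' = f • LinearMap.id := by
      rw [← LinearMap.lTensor_id, ← LinearMap.lTensor_smul]
      rfl
    rw [h_eq, LinearMap.smul_apply, LinearMap.id_apply, ← algebraMap_smul R']
    exact hy
  obtain ⟨w, rfl⟩ := (Module.Flat.lTensor_exact R' (LinearMap.exact_subtype_ker_map _) y).1 hfy
  have hr_subtype : r • K.subtype = 0 := LinearMap.ext fun x =>
    congrArg Subtype.val (Module.mem_annihilator.1 hr x)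
  change algebraMap R R' r • K.subtype.lTensor R' w = 0
  rw [algebraMap_smul, ← LinearMap.smul_apply, ← LinearMap.lTensor_smul, hr_subtype,
    LinearMap.lTensor_zero, LinearMap.zero_apply]

variable [IsNoetherianRing R]

lemma finite_ker_lsmul_of_exact {A B C : Type*} [AddCommGroup A] [Module R A] [AddCommGroup B]
    [Module R B] [AddCommGroup C] [Module R C] [Module.Finite R A] {φ : A →ₗ[R] B} {π : B →ₗ[R] C}
    (h : Function.Exact φ π) (hπ : Function.Surjective π) (z : R)
    [Module.Finite R (LinearMap.ker (LinearMap.lsmul R B z))] :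
    Module.Finite R (LinearMap.ker (LinearMap.lsmul R C z)) := by
  let P := (LinearMap.range φ).comap (LinearMap.lsmul R B z)
  let K := LinearMap.ker (LinearMap.lsmul R B z)
  have hKP : K ≤ P := fun x hx => Submodule.mem_comap.2 (LinearMap.mem_ker.1 hx ▸ zero_mem _)
  let μ : P →ₗ[R] LinearMap.range φ := (LinearMap.lsmul R B z).restrict fun _ hx => hx
  have h_exact : Function.Exact (Submodule.inclusion hKP) μ := fun x =>
    ⟨fun hx => ⟨⟨x, congrArg Subtype.val hx⟩, rfl⟩, by
      rintro ⟨y, rfl⟩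
      exact Subtype.ext y.2⟩
  have : Module.Finite R P := finite_of_exact h_exact
  refine .of_surjective (π.restrict (p := P) fun x ⟨y, hy⟩ => ?_) fun ⟨c, hc⟩ => ?_
  · rw [LinearMap.mem_ker, LinearMap.lsmul_apply, ← map_smul]
    exact (h _).2 ⟨y, hy⟩
  · obtain ⟨x, rfl⟩ := hπ c
    exact ⟨⟨x, (h _).1 ((map_smul π z x).trans hc)⟩, rfl⟩

namespace ModuleExt

variable {X : Type u} [AddCommGroup X] [Module R X] {a : Ideal R}

lemma finite_ker_lsmul (hX : IsPowTorsion a X) [Module.Finite R (ModuleExt R (R ⧸ a) X 0)]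
    [Module.Finite R (ModuleExt R (R ⧸ a) X 1)] [Module.Finite R (ModuleExt R (R ⧸ a) X 2)] {z : R}
    (hz : ringKrullDim (R ⧸ a ⊔ Ideal.span {z}) ≤ 1) (i : ℕ) :
    Module.Finite R (LinearMap.ker (LinearMap.lsmul R (ModuleExt R (R ⧸ a) X i) z)) := by
  let K := LinearMap.ker (LinearMap.lsmul R X z)
  let Q := X ⧸ LinearMap.range (LinearMap.lsmul R X z)
  have : Module.Finite R (ModuleExt R (R ⧸ a) K 0) :=
    .of_injective _ (map_zero_injective _ K.subtype_injective)
  have : Module.Finite R (ModuleExt R (R ⧸ a) K 1) := finite_one_ker_lsmul _ z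
  have hK_tors : IsPowTorsion (a ⊔ Ideal.span {z}) K := (hX.submodule K).sup
    (.span_singleton fun x => ⟨1, by rw [pow_one]; exact Subtype.ext x.2⟩)
  have hK := finite_of_ringKrullDim_quotient_le_one le_sup_left hz hK_tors
  have : Module.Finite R (ModuleExt R (R ⧸ a) Q 0) :=
    (finiteUpTo_quotient_range_lsmul _ z 0 (.of_finite ⊥) (.of_finite ⊥) (.of_finite ⊥)).finite
  have : Module.Finite R (ModuleExt R (R ⧸ a) Q 1) :=
    (finiteUpTo_quotient_range_lsmul _ z 1 (.of_finite ⊥) (.of_finite ⊥) (.of_finite ⊥)).finite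
  have hQ_tors : IsPowTorsion (a ⊔ Ideal.span {z}) Q := (hX.quotient _).sup
    (.span_singleton fun x => ⟨1, by
      obtain ⟨x, rfl⟩ := Submodule.mkQ_surjective _ x
      rw [pow_one]
      exact (Submodule.Quotient.mk_eq_zero _).2 ⟨x, rfl⟩⟩)
  have hQ := finite_of_ringKrullDim_quotient_le_one le_sup_left hz hQ_tors
  exact (finiteUpTo_ker_lsmul _ z (fun _ => .of_finite ⊥) (fun _ => .of_finite ⊥) i).finite

lemma finite_baseChange (R' : Type u) [CommRing R'] [Algebra R R'] [Module.Flat R R'] (i : ℕ)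
    [Module.Finite R (ModuleExt R (R ⧸ a) X i)] :
    Module.Finite R' (ModuleExt R' (R' ⧸ a.map (algebraMap R R')) (R' ⊗[R] X) i) := by
  obtain ⟨e⟩ := nonempty_baseChange_quotient_equiv R' X a i
  exact .equiv e

theorem tateModule_eq_bot (hX : IsPowTorsion a X) [Module.Finite R (ModuleExt R (R ⧸ a) X 0)]
    [Module.Finite R (ModuleExt R (R ⧸ a) X 1)] [Module.Finite R (ModuleExt R (R ⧸ a) X 2)] {i : ℕ}
    {f : R} (hf : ringKrullDim (R ⧸ a ⊔ Ideal.span {f}) ≤ 1) {A F : Type*} [AddCommGroup A]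
    [Module R A] [Module.Finite R A] [AddCommGroup F] [Module R F]
    {φ : A →ₗ[R] ModuleExt R (R ⧸ a) X i} {π : ModuleExt R (R ⧸ a) X i →ₗ[R] F}
    (h : Function.Exact φ π) (hπ : Function.Surjective π) (hF : IsPowTorsion (Ideal.span {f}) F)
    (hFf : ringKrullDim (R ⧸ Module.annihilator R (LinearMap.ker (LinearMap.lsmul R F f))) ≤ 0) :
    tateModule f F = ⊥ := by
  let R' := AdicCompletion (Ideal.span {f}) R
  have h_map : (a ⊔ Ideal.span {f}).map (algebraMap R R') =
      a.map (algebraMap R R') ⊔ Ideal.span {algebraMap R R' f} := by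
    rw [Ideal.map_sup, Ideal.map_span, Set.image_singleton]
  have hf_ann : Ideal.span {f} ≤
      Module.annihilator R (LinearMap.ker (LinearMap.lsmul R F f)) := by
    rw [Ideal.span_singleton_le_iff_mem, Module.mem_annihilator]
    exact fun x => Subtype.ext x.2
  have hF' : IsPowTorsion (Ideal.span {algebraMap R R' f}) (R' ⊗[R] F) := by
    simpa only [Ideal.map_span, Set.image_singleton] using hF.baseChange R'
  refine tateModule.eq_bot_of_injective hF.mk_one_injective
    (tateModule.eq_bot_of_ringKrullDim_quotient_le (b := a.map (algebraMap R R')) ?_ hF' ?_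
      fun z hz => ?_)
  · exact h_map ▸ (ringKrullDim_quotient_map_adicCompletion_le le_sup_right).trans hf
  · exact (ringKrullDim_quotient_le_of_le_radical
      ((map_annihilator_ker_lsmul_le R' F f).trans Ideal.le_radical)).trans
        ((ringKrullDim_quotient_map_adicCompletion_le hf_ann).trans hFf)
  · obtain ⟨e⟩ := nonempty_baseChange_quotient_equiv R' X a i
    have h_exact := e.conj_exact_iff_exact (φ.baseChange R') (π.baseChange R') |>.2
      (lTensor_exact R' h hπ)
    have := finite_baseChange (a := a) (X := X) R' 0
    have := finite_baseChange (a := a) (X := X) R' 1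
    have := finite_baseChange (a := a) (X := X) R' 2
    have := finite_ker_lsmul (hX.baseChange R') hz i
    exact finite_ker_lsmul_of_exact h_exact
      ((LinearMap.lTensor_surjective R' hπ).comp e.symm.surjective) z

theorem finiteUpTo_minimalPrimesCompl_sup_span_singleton (hX : IsPowTorsion a X)
    [Module.Finite R (ModuleExt R (R ⧸ a) X 0)] [Module.Finite R (ModuleExt R (R ⧸ a) X 1)] (f : R)
    (i : ℕ) :
    FiniteUpTo (minimalPrimesCompl (a ⊔ Ideal.span {f})) (ModuleExt R (R ⧸ a) X i) := by
  let J := a ⊔ Ideal.span {f}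
  let R' := Localization (minimalPrimesCompl J)
  have hf_jac : algebraMap R R' f ∈ Ring.jacobson R' :=
    map_le_jacobson_localization_minimalPrimesCompl J
      (Ideal.mem_map_of_mem _ (Ideal.mem_sup_right (Ideal.mem_span_singleton_self f)))
  have h_dim :
      ringKrullDim (R' ⧸ a.map (algebraMap R R') ⊔ Ideal.span {algebraMap R R' f}) ≤ 0 := by
    rw [← Set.image_singleton, ← Ideal.map_span, ← Ideal.map_sup]
    exact ringKrullDim_quotient_map_localization_minimalPrimesCompl J
  have h_dim_le : ringKrullDim (R' ⧸ a.map (algebraMap R R')) ≤ 1 :=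
    (ringKrullDim_quotient_le_add_one_of_mem_jacobson hf_jac).trans (add_le_add_left h_dim 1)
  have : Module.Flat R R' := IsLocalization.flat R' (minimalPrimesCompl J)
  have := finite_baseChange (a := a) (X := X) R' 0
  have := finite_baseChange (a := a) (X := X) R' 1
  have := finite_of_ringKrullDim_quotient_le_one le_rfl h_dim_le (hX.baseChange R') i
  obtain ⟨e⟩ := nonempty_baseChange_quotient_equiv R' X a i
  have : Module.Finite R' (R' ⊗[R] ModuleExt R (R ⧸ a) X i) := .equiv e.symm
  exact .of_finite_isLocalizedModule R' (TensorProduct.mk R R' (ModuleExt R (R ⧸ a) X i) 1)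

/-
Up to a finitely generated submodule `L`, the module `Ext(R / a, X)` is both `f`-power torsion and
torsion for the complement of the minimal primes of `a + (f)`, so that the kernel of `f` on its
quotient `F` by `L` lives in dimension zero.
-/
theorem finite_of_ringKrullDim_quotient_le_two (ha : ringKrullDim (R ⧸ a) ≤ 2)
    (hX : IsPowTorsion a X) [Module.Finite R (ModuleExt R (R ⧸ a) X 0)]
    [Module.Finite R (ModuleExt R (R ⧸ a) X 1)] [Module.Finite R (ModuleExt R (R ⧸ a) X 2)]
    (i : ℕ) : Module.Finite R (ModuleExt R (R ⧸ a) X i) := by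
  obtain ⟨f, hfa, hf⟩ := exists_finiteUpTo_powers hX
  have hf_dim : ringKrullDim (R ⧸ a ⊔ Ideal.span {f}) ≤ (1 : ℕ) :=
    ringKrullDim_quotient_sup_span_singleton_le_of_notMem ha hfa
  obtain ⟨L₁, hL₁, hL₁f⟩ := hf i
  obtain ⟨L₂, hL₂, hL₂S⟩ := finiteUpTo_minimalPrimesCompl_sup_span_singleton hX f i
  let L := L₁ ⊔ L₂
  have : Module.Finite R L := Module.Finite.iff_fg.2 (hL₁.sup hL₂)
  let F := ModuleExt R (R ⧸ a) X i ⧸ L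
  let K := LinearMap.ker (LinearMap.lsmul R F f)
  have hL_exact : Function.Exact L.subtype L.mkQ := LinearMap.exact_subtype_mkQ L
  have := finite_ker_lsmul hX hf_dim i
  have : Module.Finite R K := finite_ker_lsmul_of_exact hL_exact L.mkQ_surjective f
  have hFf (z : F) : ∃ n : ℕ, f ^ n • z = 0 := by
    obtain ⟨x, rfl⟩ := L.mkQ_surjective z
    obtain ⟨_, ⟨n, rfl⟩, hn⟩ := hL₁f x
    exact ⟨n, (Submodule.Quotient.mk_eq_zero L).2 (Submodule.mem_sup_left hn)⟩
  have hfK : f ∈ Module.annihilator R K := Module.mem_annihilator.2 fun z => Subtype.ext z.2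
  have haK : a ⊔ Ideal.span {f} ≤ Module.annihilator R K :=
    sup_le (((le_annihilator a X i).trans (L.mkQ.annihilator_le_of_surjective
      L.mkQ_surjective)).trans (K.subtype.annihilator_le_of_injective K.subtype_injective))
      ((Ideal.span_singleton_le_iff_mem _).2 hfK)
  have hK_dim : ringKrullDim (R ⧸ Module.annihilator R K) ≤ (0 : ℕ) :=
    ringKrullDim_quotient_annihilator_le_of_forall_exists_smul_eq_zero (by simpa using hf_dim)
      (haK.trans Ideal.le_radical) fun ⟨z, _⟩ => by
        obtain ⟨x, rfl⟩ := L.mkQ_surjective z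
        obtain ⟨s, hs, hsx⟩ := hL₂S x
        exact ⟨s, hs, Subtype.ext
          ((Submodule.Quotient.mk_eq_zero L).2 (Submodule.mem_sup_right hsx))⟩
  have : IsArtinian R K := isArtinian_of_ringKrullDim_quotient_le_zero hK_dim le_rfl
  have : IsArtinian R F := isArtinian_of_ker_lsmul hFf
  have : Module.Finite R F := tateModule.finite_of_eq_bot (.span_singleton hFf)
    (tateModule_eq_bot hX hf_dim hL_exact L.mkQ_surjective (.span_singleton hFf) hK_dim)
  exact finite_of_exact hL_exact

end ModuleExt

end DimensionTwo

/-! ### Torsion submodules and injective modules -/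

section PowTorsionSubmodule

variable {R X Y : Type*} [CommRing R] [AddCommGroup X] [Module R X] [AddCommGroup Y] [Module R Y]
  {a : Ideal R}

/-- The largest `a`-power torsion submodule of `X`. For finitely generated `a` it is `Γ_a(X)`, the
submodule of elements killed by a power of `a`. -/
def powTorsion (a : Ideal R) (X : Type*) [AddCommGroup X] [Module R X] : Submodule R X where
  carrier := {x | a ≤ (Ideal.torsionOf R X x).radical}
  zero_mem' := by simp [Ideal.radical_top]
  add_mem' {x y} hx hy := by
    have h_inf : Ideal.torsionOf R X x ⊓ Ideal.torsionOf R X y ≤ Ideal.torsionOf R X (x + y) :=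
      fun r hr => by
        rw [Ideal.mem_torsionOf_iff, smul_add, (Ideal.mem_torsionOf_iff _ _).1 hr.1,
          (Ideal.mem_torsionOf_iff _ _).1 hr.2, add_zero]
    exact (le_inf hx hy).trans ((Ideal.radical_inf _ _).ge.trans (Ideal.radical_mono h_inf))
  smul_mem' c _ hx := hx.trans (Ideal.radical_mono fun r hr => by
    rw [Ideal.mem_torsionOf_iff, smul_comm, (Ideal.mem_torsionOf_iff _ _).1 hr, smul_zero])

lemma mem_powTorsion {x : X} : x ∈ powTorsion a X ↔ ∀ r ∈ a, ∃ n : ℕ, r ^ n • x = 0 := Iff.rfl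

lemma isPowTorsion_powTorsion (a : Ideal R) (X : Type*) [AddCommGroup X] [Module R X] :
    IsPowTorsion a (powTorsion a X) := fun r hr x =>
  (mem_powTorsion.1 x.2 r hr).imp fun _ hn => Subtype.ext hn

lemma IsPowTorsion.powTorsion_eq_top (h : IsPowTorsion a X) : powTorsion a X = ⊤ :=
  eq_top_iff.2 fun x _ => mem_powTorsion.2 fun r hr => h r hr x

lemma torsionBySet_le_powTorsion {b : Ideal R} (h : a ≤ b.radical) :
    Submodule.torsionBySet R X (b : Set R) ≤ powTorsion a X := fun _ hx =>
  mem_powTorsion.2 fun r hr => (h hr).imp fun n hn => mem_torsionBySet_ideal_iff.1 hx (r ^ n) hn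

lemma powTorsion_quotient_powTorsion (a : Ideal R) (X : Type*) [AddCommGroup X] [Module R X] :
    powTorsion a (X ⧸ powTorsion a X) = ⊥ := by
  refine (Submodule.eq_bot_iff _).2 fun y hy => ?_
  obtain ⟨x, rfl⟩ := Submodule.mkQ_surjective _ y
  refine (Submodule.Quotient.mk_eq_zero _).2 (mem_powTorsion.2 fun r hr => ?_)
  obtain ⟨n, hn⟩ := mem_powTorsion.1 hy r hr
  obtain ⟨m, hm⟩ := mem_powTorsion.1 ((Submodule.Quotient.mk_eq_zero _).1 hn) r hr
  exact ⟨m + n, by rw [pow_add, mul_smul, hm]⟩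

lemma comap_powTorsion_of_injective {φ : X →ₗ[R] Y} (hφ : Function.Injective φ) :
    (powTorsion a Y).comap φ = powTorsion a X := by
  ext x
  simp only [Submodule.mem_comap, mem_powTorsion, ← map_smul, map_eq_zero_iff φ hφ]

lemma IsPowTorsion.support_subset_zeroLocus (h : IsPowTorsion a X) :
    Module.support R X ⊆ PrimeSpectrum.zeroLocus (a : Set R) := fun p hp r hr => by
  obtain ⟨x, hx⟩ := Module.mem_support_iff'.1 hp
  obtain ⟨n, hn⟩ := h r hr x
  by_contra hrp
  exact hx (r ^ n) (fun h_mem => hrp (p.2.mem_of_pow_mem n h_mem)) hn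

end PowTorsionSubmodule

section Injective

variable {R : Type u} [CommRing R] {X : Type u} [AddCommGroup X] [Module R X] {a : Ideal R}

lemma exists_linearMap_to_injective (R : Type u) [CommRing R] (X : Type u)
    [AddCommGroup X] [Module R X] :
    ∃ (I : Type u) (_ : AddCommGroup I) (_ : Module R I) (φ : X →ₗ[R] I),
      Module.Injective R I ∧ Function.Injective φ := by
  let I : ModuleCat.{u} R := Injective.under (ModuleCat.of R X)
  have hI : Injective (ModuleCat.of R I) := Injective.injective_under (ModuleCat.of R X)
  exact ⟨I, inferInstance, inferInstance, (Injective.ι (ModuleCat.of R X)).hom,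
    Module.injective_module_of_injective_object R I,
    (ModuleCat.mono_iff_injective _).1 inferInstance⟩

lemma ModuleExt.subsingleton_of_injective (N X : Type u) [AddCommGroup N] [Module R N]
    [AddCommGroup X] [Module R X] [Module.Injective R X] (i : ℕ) :
    Subsingleton (ModuleExt R N X (i + 1)) :=
  have := Module.injective_object_of_injective_module R X
  Abelian.Ext.subsingleton_of_injective (ModuleCat.of R N) (ModuleCat.of R X) i

lemma injective_quotient (L : Submodule R X) [Module.Injective R X] [Module.Injective R L] :
    Module.Injective R (X ⧸ L) := by
  obtain ⟨ρ, hρ⟩ := Module.Injective.out L.subtype L.subtype_injective LinearMap.id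
  have h_compl := LinearMap.isCompl_of_proj hρ
  let σ : (X ⧸ L) →ₗ[R] X :=
    (LinearMap.ker ρ).subtype ∘ₗ (Submodule.quotientEquivOfIsCompl L _ h_compl).toLinearMap
  refine ⟨fun A B _ _ _ _ f hf g => ?_⟩
  obtain ⟨h, hh⟩ := Module.Injective.out f hf (σ ∘ₗ g)
  refine ⟨L.mkQ ∘ₗ h, fun x => ?_⟩
  rw [LinearMap.comp_apply, hh]
  exact Submodule.mk_quotientEquivOfIsCompl_apply h_compl (g x)

lemma exists_mem_torsionBySet_forall_apply_eq_smul [Module.Injective R X] {I J : Ideal R}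
    (φ : J →ₗ[R] X) (hφ : ∀ j : J, (j : R) ∈ I → φ j = 0) :
    ∃ y ∈ Submodule.torsionBySet R X (I : Set R), ∀ j : J, φ j = (j : R) • y := by
  let ι := Submodule.mapQ (Submodule.comap J.subtype I) I J.subtype le_rfl
  have hι : Function.Injective ι := by
    rw [← LinearMap.ker_eq_bot, Submodule.ker_mapQ, Submodule.mkQ_map_self]
  obtain ⟨ψ, hψ⟩ := Module.Injective.out ι hι (Submodule.liftQ (Submodule.comap J.subtype I) φ hφ)
  have h_smul (r : R) : r • ψ 1 = ψ (I.mkQ r) := by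
    rw [← map_smul, Algebra.smul_def, mul_one]
    rfl
  refine ⟨ψ 1, mem_torsionBySet_ideal_iff.2 fun r hr => ?_, fun j => ?_⟩
  · rw [h_smul, Submodule.mkQ_apply, (Submodule.Quotient.mk_eq_zero I).2 hr, map_zero]
  · rw [h_smul]
    exact (hψ (Submodule.Quotient.mk j)).symm

variable [IsNoetherianRing R]

lemma IsPowTorsion.exists_comap_pow_smul_top_le_ker (hX : IsPowTorsion a X) {N : Type*}
    [AddCommGroup N] [Module R N] [Module.Finite R N] (L : Submodule R N) (φ : L →ₗ[R] X) :
    ∃ n : ℕ, (a ^ n • ⊤ : Submodule R N).comap L.subtype ≤ LinearMap.ker φ := by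
  obtain ⟨t, ht⟩ := Ideal.exists_pow_le_of_le_radical_of_fg
    (hX.submodule (LinearMap.range φ)).le_radical_annihilator (IsNoetherian.noetherian a)
  have h_ker : a ^ t • ⊤ ≤ LinearMap.ker φ := Submodule.smul_le.2 fun r hr x _ => by
    rw [LinearMap.mem_ker, map_smul]
    exact congrArg Subtype.val (Module.mem_annihilator.1 (ht hr) ⟨φ x, x, rfl⟩)
  obtain ⟨k, hk⟩ := Ideal.exists_pow_inf_eq_pow_smul a L
  refine ⟨t + k, fun x hx => h_ker ?_⟩
  have hx_mem : (x : N) ∈ a ^ t • L := by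
    refine Submodule.smul_mono le_rfl inf_le_right (?_ : _ ∈ a ^ t • (a ^ k • ⊤ ⊓ L))
    rw [← Nat.add_sub_cancel (n := t) (m := k), ← hk _ (Nat.le_add_left _ _)]
    exact ⟨hx, x.2⟩
  have h_map : (a ^ t • ⊤ : Submodule R L).map L.subtype = a ^ t • L := by
    rw [Submodule.map_smul'', Submodule.map_subtype_top]
  obtain ⟨y, hy, hyx⟩ := h_map.ge hx_mem
  exact Subtype.ext hyx ▸ hy

instance injective_powTorsion [Module.Injective R X] : Module.Injective R (powTorsion a X) := by
  refine Module.Baer.injective fun J φ => ?_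
  obtain ⟨n, hn⟩ := (isPowTorsion_powTorsion a X).exists_comap_pow_smul_top_le_ker J φ
  rw [smul_eq_mul, Ideal.mul_top] at hn
  obtain ⟨y, hy, hφy⟩ := exists_mem_torsionBySet_forall_apply_eq_smul
    ((powTorsion a X).subtype ∘ₗ φ) (I := a ^ n) (J := J) fun j hj => congrArg Subtype.val (hn hj)
  have h_mem : y ∈ powTorsion a X :=
    torsionBySet_le_powTorsion (fun r hr => ⟨n, Ideal.pow_mem_pow hr n⟩) hy
  exact ⟨LinearMap.toSpanSingleton R _ ⟨y, h_mem⟩, fun j hj => Subtype.ext (hφy ⟨j, hj⟩).symm⟩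

lemma IsPowTorsion.exists_linearMap_to_injective_isPowTorsion (hX : IsPowTorsion a X) :
    ∃ (I : Type u) (_ : AddCommGroup I) (_ : Module R I) (φ : X →ₗ[R] I),
      Module.Injective R I ∧ Function.Injective φ ∧ IsPowTorsion a I := by
  obtain ⟨J, _, _, φ, hJ, hφ⟩ := exists_linearMap_to_injective R X
  have h_mem (x : X) : φ x ∈ powTorsion a J := by
    rw [← Submodule.mem_comap, comap_powTorsion_of_injective hφ, hX.powTorsion_eq_top]
    trivial
  exact ⟨powTorsion a J, inferInstance, inferInstance, φ.codRestrict _ h_mem, inferInstance,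
    fun x y h => hφ (congrArg Subtype.val h), isPowTorsion_powTorsion a J⟩

lemma exists_linearMap_to_injective_powTorsion_eq_bot (hX : powTorsion a X = ⊥) :
    ∃ (I : Type u) (_ : AddCommGroup I) (_ : Module R I) (φ : X →ₗ[R] I),
      Module.Injective R I ∧ Function.Injective φ ∧ powTorsion a I = ⊥ := by
  obtain ⟨J, _, _, φ, hJ, hφ⟩ := exists_linearMap_to_injective R X
  refine ⟨J ⧸ powTorsion a J, inferInstance, inferInstance, (powTorsion a J).mkQ ∘ₗ φ,
    injective_quotient _, ?_, powTorsion_quotient_powTorsion a J⟩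
  rw [← LinearMap.ker_eq_bot, LinearMap.ker_comp, Submodule.ker_mkQ,
    comap_powTorsion_of_injective hφ, hX]

end Injective

/-! ### Local cohomology -/

section Exact

lemma exact_directLimit_map {R ι : Type*} [Ring R] [Preorder ι] [IsDirectedOrder ι] [Nonempty ι]
    [DecidableEq ι] {A B C : ι → Type*} [∀ i, AddCommGroup (A i)] [∀ i, Module R (A i)]
    [∀ i, AddCommGroup (B i)] [∀ i, Module R (B i)] [∀ i, AddCommGroup (C i)]
    [∀ i, Module R (C i)] {fA : ∀ i j, i ≤ j → A i →ₗ[R] A j} {fB : ∀ i j, i ≤ j → B i →ₗ[R] B j}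
    {fC : ∀ i j, i ≤ j → C i →ₗ[R] C j} [DirectedSystem C fun _ _ h => fC _ _ h]
    {u : ∀ i, A i →ₗ[R] B i} {v : ∀ i, B i →ₗ[R] C i}
    (hu : ∀ i j h, u j ∘ₗ fA i j h = fB i j h ∘ₗ u i)
    (hv : ∀ i j h, v j ∘ₗ fB i j h = fC i j h ∘ₗ v i)
    (huv : ∀ i, Function.Exact (u i) (v i)) :
    Function.Exact (Module.DirectLimit.map u hu) (Module.DirectLimit.map v hv) := by
  refine fun z => ⟨fun hz => ?_, ?_⟩
  · obtain ⟨i, x, rfl⟩ := Module.DirectLimit.exists_of z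
    rw [Module.DirectLimit.map_apply_of] at hz
    obtain ⟨j, hij, hx⟩ := Module.DirectLimit.of.zero_exact hz
    rw [← LinearMap.comp_apply, ← hv] at hx
    obtain ⟨y, hy⟩ := (huv j _).1 hx
    exact ⟨Module.DirectLimit.of R ι A fA j y, by
      rw [Module.DirectLimit.map_apply_of, hy, Module.DirectLimit.of_f]⟩
  · rintro ⟨w, rfl⟩
    obtain ⟨i, y, rfl⟩ := Module.DirectLimit.exists_of w
    rw [Module.DirectLimit.map_apply_of, Module.DirectLimit.map_apply_of,
      (huv i).apply_apply_eq_zero, map_zero]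

lemma bijective_of_exact_of_subsingleton {R A B C D : Type*} [Ring R] [AddCommGroup A]
    [Module R A] [AddCommGroup B] [Module R B] [AddCommGroup C] [Module R C] [AddCommGroup D]
    [Module R D] [Subsingleton A] [Subsingleton D] {f : A →ₗ[R] B} {g : B →ₗ[R] C}
    {h : C →ₗ[R] D} (hfg : Function.Exact f g) (hgh : Function.Exact g h) :
    Function.Bijective g := by
  refine ⟨(injective_iff_map_eq_zero g).2 fun x hx => ?_,
    fun y => (hgh y).1 (Subsingleton.elim _ _)⟩
  obtain ⟨y, rfl⟩ := (hfg x).1 hx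
  rw [Subsingleton.elim y 0, map_zero]

end Exact

section ModuleLocalCohomology

variable {R : Type u} [CommRing R] (a : Ideal R)

/-- The `i`-th local cohomology `colim_t Ext^i(R/a^t, X)` of an unbundled `R`-module `X`. -/
abbrev ModuleLocalCohomology (i : ℕ) (X : Type u) [AddCommGroup X] [Module R X] : Type u :=
  Module.DirectLimit (fun t : ℕ => ModuleExt R (R ⧸ a ^ t) X i)
    fun _ _ h => ModuleExt.comap X (Submodule.factor (Ideal.pow_le_pow_right h)) i

namespace ModuleLocalCohomology

instance directedSystem (i : ℕ) (X : Type u) [AddCommGroup X] [Module R X] :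
    DirectedSystem (fun t : ℕ => ModuleExt R (R ⧸ a ^ t) X i) fun _ _ h =>
      ModuleExt.comap X (Submodule.factor (Ideal.pow_le_pow_right h)) i where
  map_self t x := by
    have h_id : Submodule.factor (le_refl (a ^ t)) = LinearMap.id := by ext; rfl
    rw [h_id, ModuleExt.comap_id]
  map_map _ _ _ h h' x := by
    rw [ModuleExt.comap_comap, Submodule.factor_comp]

lemma isPowTorsion (i : ℕ) (X : Type u) [AddCommGroup X] [Module R X] :
    IsPowTorsion a (ModuleLocalCohomology a i X) := fun r hr z => by
  obtain ⟨t, x, rfl⟩ := Module.DirectLimit.exists_of z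
  have h_ann := ModuleExt.le_annihilator (a ^ t) X i (Ideal.pow_mem_pow hr t)
  exact ⟨t, by rw [← map_smul, Module.mem_annihilator.1 h_ann x, map_zero]⟩

lemma subsingleton (i : ℕ) (X : Type u) [AddCommGroup X] [Module R X]
    (h : ∀ t, Subsingleton (ModuleExt R (R ⧸ a ^ t) X i)) :
    Subsingleton (ModuleLocalCohomology a i X) := by
  refine subsingleton_of_forall_eq 0 fun z => ?_
  obtain ⟨t, x, rfl⟩ := Module.DirectLimit.exists_of z
  rw [(h t).elim x 0, map_zero]

section LongExactSequence

variable {A X B : Type u} [AddCommGroup A] [Module R A] [AddCommGroup X] [Module R X]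
  [AddCommGroup B] [Module R B]

/-- The functoriality of local cohomology. -/
noncomputable def map (f : A →ₗ[R] X) (i : ℕ) :
    ModuleLocalCohomology a i A →ₗ[R] ModuleLocalCohomology a i X :=
  Module.DirectLimit.map (fun t => ModuleExt.map (R ⧸ a ^ t) f i)
    fun _ _ _ => LinearMap.ext fun x => (ModuleExt.comap_map _ f i x).symm

variable {f : A →ₗ[R] X} {g : X →ₗ[R] B} (hf : Function.Injective f)
  (hg : Function.Surjective g) (hfg : Function.Exact f g)

/-- The connecting homomorphism of the long exact sequence of local cohomology. -/
noncomputable def δ (i : ℕ) : ModuleLocalCohomology a i B →ₗ[R] ModuleLocalCohomology a (i + 1) A :=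
  Module.DirectLimit.map (fun t => ModuleExt.δ (R ⧸ a ^ t) hf hg hfg i)
    fun _ _ _ => LinearMap.ext fun x => (ModuleExt.comap_δ hf hg hfg _ i x).symm

include hf hg hfg in
lemma exact_map_map (i : ℕ) : Function.Exact (map a f i) (map a g i) :=
  exact_directLimit_map _ _ fun t => ModuleExt.exact_map_map (R ⧸ a ^ t) hf hg hfg i

lemma exact_map_δ (i : ℕ) : Function.Exact (map a g i) (δ a hf hg hfg i) :=
  exact_directLimit_map _ _ fun t => ModuleExt.exact_map_δ (R ⧸ a ^ t) hf hg hfg i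

lemma exact_δ_map (i : ℕ) : Function.Exact (δ a hf hg hfg i) (map a f (i + 1)) :=
  exact_directLimit_map _ _ fun t => ModuleExt.exact_δ_map (R ⧸ a ^ t) hf hg hfg i

end LongExactSequence

end ModuleLocalCohomology

end ModuleLocalCohomology

section ModuleLocalCohomology

variable {R : Type u} [CommRing R] {a : Ideal R}

lemma ModuleExt.coe_zeroEquivTorsionBySet_map (a : Ideal R) {X Y : Type u} [AddCommGroup X]
    [Module R X] [AddCommGroup Y] [Module R Y] (f : X →ₗ[R] Y) (x : ModuleExt R (R ⧸ a) X 0) :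
    (zeroEquivTorsionBySet a Y (map (R ⧸ a) f 0 x) : Y) = f (zeroEquivTorsionBySet a X x) :=
  LinearMap.congr_fun (zeroEquiv_map (R ⧸ a) f x) 1

lemma ModuleExt.coe_zeroEquivTorsionBySet_comap_factor {b : Ideal R} (h : b ≤ a) {X : Type u}
    [AddCommGroup X] [Module R X] (x : ModuleExt R (R ⧸ a) X 0) :
    (zeroEquivTorsionBySet b X (comap X (Submodule.factor h) 0 x) : X) =
      zeroEquivTorsionBySet a X x :=
  LinearMap.congr_fun (zeroEquiv_comap (Submodule.factor h) x) 1

namespace ModuleLocalCohomology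

section Zero

variable {X Y : Type u} [AddCommGroup X] [Module R X] [AddCommGroup Y] [Module R Y]

/-- The canonical map `H⁰_a(X) → X`, which identifies `H⁰_a(X)` with `Γ_a(X)`. -/
noncomputable def zeroToModule (a : Ideal R) (X : Type u) [AddCommGroup X] [Module R X] :
    ModuleLocalCohomology a 0 X →ₗ[R] X :=
  Module.DirectLimit.lift R ℕ _ _
    (fun t => Submodule.subtype _ ∘ₗ (ModuleExt.zeroEquivTorsionBySet (a ^ t) X).toLinearMap)
    fun _ _ h x =>
      ModuleExt.coe_zeroEquivTorsionBySet_comap_factor (Ideal.pow_le_pow_right h) x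

lemma zeroToModule_of (t : ℕ) (x : ModuleExt R (R ⧸ a ^ t) X 0) :
    zeroToModule a X (Module.DirectLimit.of R ℕ _ _ t x) =
      ModuleExt.zeroEquivTorsionBySet (a ^ t) X x :=
  Module.DirectLimit.lift_of ..

lemma zeroToModule_injective : Function.Injective (zeroToModule a X) :=
  Module.DirectLimit.lift_injective _ _ fun t =>
    (Submodule.subtype_injective _).comp (ModuleExt.zeroEquivTorsionBySet (a ^ t) X).injective

lemma zeroToModule_map (f : X →ₗ[R] Y) (z : ModuleLocalCohomology a 0 X) :
    zeroToModule a Y (map a f 0 z) = f (zeroToModule a X z) := by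
  obtain ⟨t, x, rfl⟩ := Module.DirectLimit.exists_of z
  rw [map, Module.DirectLimit.map_apply_of, zeroToModule_of, zeroToModule_of,
    ModuleExt.coe_zeroEquivTorsionBySet_map]

variable [IsNoetherianRing R]

lemma range_zeroToModule : LinearMap.range (zeroToModule a X) = powTorsion a X := by
  apply le_antisymm
  · rintro _ ⟨z, rfl⟩
    refine mem_powTorsion.2 fun r hr => (isPowTorsion a 0 X r hr z).imp fun n hn => ?_
    rw [← map_smul, hn, map_zero]
  · intro x hx
    obtain ⟨t, ht⟩ := Ideal.exists_pow_le_of_le_radical_of_fg hx (IsNoetherian.noetherian a)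
    have hx : x ∈ Submodule.torsionBySet R X ((a ^ t : Ideal R) : Set R) :=
      mem_torsionBySet_ideal_iff.2 fun r hr => ht hr
    refine ⟨Module.DirectLimit.of R ℕ _ _ t
      ((ModuleExt.zeroEquivTorsionBySet (a ^ t) X).symm ⟨x, hx⟩), ?_⟩
    rw [zeroToModule_of, LinearEquiv.apply_symm_apply]

/-- The identification of `H⁰_a(X)` with `Γ_a(X)`. -/
noncomputable def zeroEquiv (a : Ideal R) (X : Type u) [AddCommGroup X] [Module R X] :
    ModuleLocalCohomology a 0 X ≃ₗ[R] powTorsion a X :=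
  (LinearEquiv.ofInjective _ zeroToModule_injective).trans (LinearEquiv.ofEq _ _ range_zeroToModule)

lemma map_zero_surjective (hX : IsPowTorsion a X) {g : X →ₗ[R] Y} (hg : Function.Surjective g) :
    Function.Surjective (map a g 0) := fun z => by
  obtain ⟨x, hx⟩ := hg (zeroToModule a Y z)
  obtain ⟨w, rfl⟩ : x ∈ LinearMap.range (zeroToModule a X) := by
    rw [range_zeroToModule, hX.powTorsion_eq_top]
    trivial
  exact ⟨w, zeroToModule_injective (by rw [zeroToModule_map, hx])⟩

end Zero

variable [IsNoetherianRing R]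

theorem subsingleton_of_isPowTorsion {X : Type u} [AddCommGroup X] [Module R X]
    (hX : IsPowTorsion a X) (i : ℕ) : Subsingleton (ModuleLocalCohomology a (i + 1) X) := by
  obtain ⟨I, _, _, f, _, hf, hI⟩ := hX.exists_linearMap_to_injective_isPowTorsion
  have hg : Function.Surjective (LinearMap.range f).mkQ := Submodule.mkQ_surjective _
  have hfg : Function.Exact f (LinearMap.range f).mkQ := LinearMap.exact_map_mkQ_range f
  have hI_zero (n : ℕ) : Subsingleton (ModuleLocalCohomology a (n + 1) I) :=
    subsingleton _ _ _ fun t => ModuleExt.subsingleton_of_injective (R ⧸ a ^ t) I n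
  have h_map : Function.Surjective (map a (LinearMap.range f).mkQ i) := by
    cases i with
    | zero => exact map_zero_surjective hI hg
    | succ i =>
      have := subsingleton_of_isPowTorsion (hI.quotient (LinearMap.range f)) i
      exact fun y => ⟨0, Subsingleton.elim _ _⟩
  refine subsingleton_of_forall_eq 0 fun z => ?_
  obtain ⟨y, rfl⟩ := (exact_δ_map a hf hg hfg i z).1 (Subsingleton.elim _ _)
  obtain ⟨x, rfl⟩ := h_map y
  exact (exact_map_δ a hf hg hfg i).apply_apply_eq_zero x

end ModuleLocalCohomology

end ModuleLocalCohomology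

section Cofinite

variable {R : Type u} [CommRing R] {a : Ideal R}

lemma ModuleExt.subsingleton_zero_of_powTorsion_eq_bot {b : Ideal R} (h : a ≤ b.radical)
    {X : Type u} [AddCommGroup X] [Module R X] (hX : powTorsion a X = ⊥) :
    Subsingleton (ModuleExt R (R ⧸ b) X 0) :=
  have := Submodule.subsingleton_iff_eq_bot.2
    (eq_bot_iff.2 ((torsionBySet_le_powTorsion h).trans_eq hX))
  (zeroEquivTorsionBySet b X).injective.subsingleton

lemma ModuleExt.subsingleton_of_powTorsion_eq_bot {b : Ideal R} (h : a ≤ b.radical)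
    {I : Type u} [AddCommGroup I] [Module R I] [Module.Injective R I]
    (hI : powTorsion a I = ⊥) : ∀ n, Subsingleton (ModuleExt R (R ⧸ b) I n)
  | 0 => subsingleton_zero_of_powTorsion_eq_bot h hI
  | n + 1 => subsingleton_of_injective (R ⧸ b) I n

lemma ModuleExt.finite_zero_powTorsion_iff {X : Type u} [AddCommGroup X] [Module R X] :
    Module.Finite R (ModuleExt R (R ⧸ a) (powTorsion a X) 0) ↔
      Module.Finite R (ModuleExt R (R ⧸ a) X 0) := by
  have := subsingleton_zero_of_powTorsion_eq_bot Ideal.le_radical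
    (powTorsion_quotient_powTorsion a X)
  have h_surj : Function.Surjective (map (R ⧸ a) (powTorsion a X).subtype 0) := fun y =>
    (exact_map_map (R ⧸ a) (powTorsion a X).subtype_injective (powTorsion a X).mkQ_surjective
      (LinearMap.exact_subtype_mkQ _) 0 y).1 (Subsingleton.elim _ _)
  exact Module.Finite.equiv_iff (LinearEquiv.ofBijective _
    ⟨map_zero_injective (R ⧸ a) (powTorsion a X).subtype_injective, h_surj⟩)

variable [IsNoetherianRing R]

namespace ModuleLocalCohomology

variable (a) in
lemma bijective_map_mkQ_powTorsion (D : Type u) [AddCommGroup D] [Module R D] (n : ℕ) :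
    Function.Bijective (map a (powTorsion a D).mkQ (n + 1)) := by
  have hf := (powTorsion a D).subtype_injective
  have hg := (powTorsion a D).mkQ_surjective
  have hfg := LinearMap.exact_subtype_mkQ (powTorsion a D)
  have h_zero := subsingleton_of_isPowTorsion (isPowTorsion_powTorsion a D)
  have := h_zero n
  have := h_zero (n + 1)
  exact bijective_of_exact_of_subsingleton (exact_map_map a hf hg hfg (n + 1))
    (exact_map_δ a hf hg hfg (n + 1))

variable (a) in
theorem exists_dimension_shift (D : Type u) [AddCommGroup D] [Module R D] :
    ∃ (D' : Type u) (_ : AddCommGroup D') (_ : Module R D'),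
      (∀ n, Nonempty (ModuleLocalCohomology a n D' ≃ₗ[R] ModuleLocalCohomology a (n + 1) D)) ∧
      ∀ n, Nonempty (ModuleExt R (R ⧸ a) D' n ≃ₗ[R]
        ModuleExt R (R ⧸ a) (D ⧸ powTorsion a D) (n + 1)) := by
  obtain ⟨I, _, _, f, _, hf, hI⟩ :=
    exists_linearMap_to_injective_powTorsion_eq_bot (powTorsion_quotient_powTorsion a D)
  have hg : Function.Surjective (LinearMap.range f).mkQ := Submodule.mkQ_surjective _
  have hfg : Function.Exact f (LinearMap.range f).mkQ := LinearMap.exact_map_mkQ_range f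
  refine ⟨I ⧸ LinearMap.range f, inferInstance, inferInstance, fun n => ⟨?_⟩, fun n => ⟨?_⟩⟩
  · have hI_zero (n : ℕ) : Subsingleton (ModuleLocalCohomology a n I) :=
      subsingleton a n I fun t => ModuleExt.subsingleton_of_powTorsion_eq_bot
        (fun _ hr => ⟨t, Ideal.pow_mem_pow hr t⟩) hI n
    have h_bij := bijective_of_exact_of_subsingleton (exact_map_δ a hf hg hfg n)
      (exact_δ_map a hf hg hfg n)
    exact (LinearEquiv.ofBijective _ h_bij).trans
      (LinearEquiv.ofBijective _ (bijective_map_mkQ_powTorsion a D n)).symm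
  · have hI_zero := ModuleExt.subsingleton_of_powTorsion_eq_bot Ideal.le_radical hI
    exact LinearEquiv.ofBijective _ (bijective_of_exact_of_subsingleton
      (ModuleExt.exact_map_δ (R ⧸ a) hf hg hfg n) (ModuleExt.exact_δ_map (R ⧸ a) hf hg hfg n))

end ModuleLocalCohomology

theorem ModuleExt.finite_powTorsion (ha : ringKrullDim (R ⧸ a) ≤ 2) {D : Type u} [AddCommGroup D]
    [Module R D] (hD : ∀ n, Module.Finite R (ModuleExt R (R ⧸ a) D n))
    (h_one : Module.Finite R (ModuleExt R (R ⧸ a) (ModuleLocalCohomology a 1 D) 0)) (n : ℕ) :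
    Module.Finite R (ModuleExt R (R ⧸ a) (powTorsion a D) n) := by
  have hf := (powTorsion a D).subtype_injective
  have hg := (powTorsion a D).mkQ_surjective
  have hfg := LinearMap.exact_subtype_mkQ (powTorsion a D)
  have h_zero := subsingleton_zero_of_powTorsion_eq_bot Ideal.le_radical
    (powTorsion_quotient_powTorsion a D)
  have h_ext_zero : Module.Finite R (ModuleExt R (R ⧸ a) (powTorsion a D) 0) :=
    finite_zero_powTorsion_iff.2 (hD 0)
  have h_ext_one : Module.Finite R (ModuleExt R (R ⧸ a) (powTorsion a D) 1) :=
    finite_of_exact (exact_δ_map (R ⧸ a) hf hg hfg 0)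
  have h_ext_two : Module.Finite R (ModuleExt R (R ⧸ a) (powTorsion a D) 2) := by
    obtain ⟨D', _, _, h_shift, h_ext⟩ := ModuleLocalCohomology.exists_dimension_shift a D
    obtain ⟨e⟩ := h_shift 0
    have : Module.Finite R (ModuleExt R (R ⧸ a) (powTorsion a D') 0) := Module.Finite.equiv
      (congrRight (R ⧸ a) (e.symm.trans (ModuleLocalCohomology.zeroEquiv a D')) 0)
    have : Module.Finite R (ModuleExt R (R ⧸ a) D' 0) := finite_zero_powTorsion_iff.1 this
    have : Module.Finite R (ModuleExt R (R ⧸ a) (D ⧸ powTorsion a D) 1) :=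
      Module.Finite.equiv (h_ext 0).some
    exact finite_of_exact (exact_δ_map (R ⧸ a) hf hg hfg 1)
  exact finite_of_ringKrullDim_quotient_le_two ha (isPowTorsion_powTorsion a D) n

theorem ModuleLocalCohomology.finite_ext (ha : ringKrullDim (R ⧸ a) ≤ 2) {D : Type u}
    [AddCommGroup D] [Module R D] (hD : ∀ n, Module.Finite R (ModuleExt R (R ⧸ a) D n))
    (h_hom : ∀ i, Module.Finite R (ModuleExt R (R ⧸ a) (ModuleLocalCohomology a i D) 0))
    (i n : ℕ) : Module.Finite R (ModuleExt R (R ⧸ a) (ModuleLocalCohomology a i D) n) := by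
  have h_tors := ModuleExt.finite_powTorsion ha hD (h_hom 1)
  induction i generalizing D n with
  | zero => exact Module.Finite.equiv (ModuleExt.congrRight (R ⧸ a) (zeroEquiv a D).symm n)
  | succ i ih =>
    obtain ⟨D', _, _, h_shift, h_ext⟩ := exists_dimension_shift a D
    have h_quot (n : ℕ) : Module.Finite R (ModuleExt R (R ⧸ a) (D ⧸ powTorsion a D) n) :=
      finite_of_exact (ModuleExt.exact_map_δ (R ⧸ a) (powTorsion a D).subtype_injective
        (powTorsion a D).mkQ_surjective (LinearMap.exact_subtype_mkQ _) n)
    have hD' (n : ℕ) : Module.Finite R (ModuleExt R (R ⧸ a) D' n) :=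
      Module.Finite.equiv (h_ext n).some.symm
    have h_hom' (j : ℕ) : Module.Finite R (ModuleExt R (R ⧸ a) (ModuleLocalCohomology a j D') 0) :=
      Module.Finite.equiv (ModuleExt.congrRight (R ⧸ a) (h_shift j).some.symm 0)
    have := ih hD' h_hom' n (ModuleExt.finite_powTorsion ha hD' (h_hom' 1))
    exact Module.Finite.equiv (ModuleExt.congrRight (R ⧸ a) (h_shift i).some n)

end Cofinite

/-! ### Comparison with the categorical local cohomology -/

section LocalCohomology

variable {R : Type u} [CommRing R]

section Sequence

variable (F : ℕ ⥤ ModuleCat.{u} R)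

/-- The direct limit of the modules underlying a sequence in `ModuleCat R`. -/
abbrev SequentialDirectLimit : Type u :=
  Module.DirectLimit (fun t => F.obj t) fun _ _ h => (F.map (homOfLE h)).hom

namespace SequentialDirectLimit

/-- The canonical cocone on a sequence of modules with the direct limit as its vertex. -/
noncomputable def cocone : Limits.Cocone F where
  pt := ModuleCat.of R (SequentialDirectLimit F)
  ι.app t := ModuleCat.ofHom (Module.DirectLimit.of R ℕ (fun t => F.obj t) _ t)
  ι.naturality s t h := by
    ext x
    exact Module.DirectLimit.of_f (hij := leOfHom h)

variable {F}

/-- The map out of the direct limit induced by a cocone. -/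
noncomputable def desc (c : Limits.Cocone F) : SequentialDirectLimit F →ₗ[R] c.pt :=
  Module.DirectLimit.lift R ℕ _ _ (fun t => (c.ι.app t).hom) fun _ _ h =>
    LinearMap.congr_fun (congrArg ModuleCat.Hom.hom (c.w (homOfLE h)))

lemma desc_comp_of (c : Limits.Cocone F) (t : ℕ) :
    desc c ∘ₗ Module.DirectLimit.of R ℕ (fun t => F.obj t) _ t = (c.ι.app t).hom := by
  ext x
  rw [LinearMap.comp_apply, desc, Module.DirectLimit.lift_of]

variable (F) in
/-- The direct limit of a sequence of modules is its colimit in `ModuleCat R`. -/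
noncomputable def isColimitCocone : Limits.IsColimit (cocone F) where
  desc c := ModuleCat.ofHom (desc c)
  fac c t := ModuleCat.hom_ext (desc_comp_of c t)
  uniq c _ h := ModuleCat.hom_ext <| Module.DirectLimit.hom_ext fun t =>
    (congrArg ModuleCat.Hom.hom (h t)).trans (desc_comp_of c t).symm

end SequentialDirectLimit

end Sequence

/-- Mathlib's local cohomology is the direct limit of the modules `Ext^i(R/a^t, M)`. -/
noncomputable def moduleLocalCohomologyEquiv (a : Ideal R) (i : ℕ) (M : ModuleCat.{u} R) :
    ModuleLocalCohomology a i M ≃ₗ[R] (localCohomology a i).obj M :=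
  let F := localCohomology.diagram (localCohomology.idealPowersDiagram a) i
  have : Limits.HasColimit F := localCohomology.hasColimitDiagram _ i
  let hc := Limits.isColimitOfPreserves ((evaluation _ _).obj M) (Limits.colimit.isColimit F)
  let e (t : ℕ) := derivedExtEquiv (R := R) (ModuleCat.of R (R ⧸ a ^ t)) M i
  have he (s t : ℕ) (h : s ≤ t) (x : ModuleExt R (R ⧸ a ^ s) M i) :
      ModuleExt.comap M (Submodule.factor (Ideal.pow_le_pow_right h)) i x =
        e t ((F.map (homOfLE h).op.op).app M ((e s).symm x)) := by
    refine .trans ?_ (derivedExtEquiv_map_app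
      (ModuleCat.ofHom (Submodule.factor (Ideal.pow_le_pow_right h))) M i ((e s).symm x)).symm
    rw [LinearEquiv.apply_symm_apply, ModuleExt.comap_apply]
  (Module.DirectLimit.congr (fun t => (e t).symm) fun s t h => by
    rw [LinearEquiv.toLinearMap_symm_comp_eq]
    exact LinearMap.ext (he s t h)).trans
    ((SequentialDirectLimit.isColimitCocone _).coconePointUniqueUpToIso
      ((Functor.Final.isColimitWhiskerEquiv (opOp ℕ) _).symm hc)).toLinearEquiv

lemma finite_extQuot_iff {a : Ideal R} {i : ℕ} {M : ModuleCat.{u} R} :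
    Module.Finite R (extQuot a i M) ↔ Module.Finite R (ModuleExt R (R ⧸ a) M i) :=
  Module.Finite.equiv_iff (derivedExtEquiv (R := R) (ModuleCat.of R (R ⧸ a)) M i)

lemma finite_extQuot_localCohomology_iff {a : Ideal R} {i n : ℕ} {M : ModuleCat.{u} R} :
    Module.Finite R (extQuot a n ((localCohomology a i).obj M)) ↔
      Module.Finite R (ModuleExt R (R ⧸ a) (ModuleLocalCohomology a i M) n) :=
  finite_extQuot_iff.trans
    (Module.Finite.equiv_iff (ModuleExt.congrRight (R ⧸ a)
      (moduleLocalCohomologyEquiv a i M) n)).symm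

lemma support_localCohomology_subset (a : Ideal R) (i : ℕ) (M : ModuleCat.{u} R) :
    Module.support R ((localCohomology a i).obj M) ⊆ PrimeSpectrum.zeroLocus (a : Set R) := by
  rw [← (moduleLocalCohomologyEquiv a i M).support_eq]
  exact (ModuleLocalCohomology.isPowTorsion a i M).support_subset_zeroLocus

end LocalCohomology

theorem stmt2_general {R : Type u} [CommRing R] [IsNoetherianRing R] (a : Ideal R)
    (hdim : ringKrullDim (R ⧸ a) ≤ 2) (M : ModuleCat.{u} R)
    (hM : ∀ n : ℕ, Module.Finite R (extQuot a n M)) :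
    (∀ i : ℕ, IsCofinite a ((localCohomology a i).obj M)) ↔
      (∀ i : ℕ, Module.Finite R (extQuot a 0 ((localCohomology a i).obj M))) := by
  refine ⟨fun h i => (h i).2 0, fun h i => ⟨support_localCohomology_subset a i M, fun n => ?_⟩⟩
  exact finite_extQuot_localCohomology_iff.2 <| ModuleLocalCohomology.finite_ext hdim
    (fun n => finite_extQuot_iff.1 (hM n)) (fun j => finite_extQuot_localCohomology_iff.1 (h j)) i n

theorem stmt2 {R : Type u} [CommRing R] [IsNoetherianRing R] (a : Ideal R) (ha : a ≠ ⊤)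
    (hdim : ringKrullDim (R ⧸ a) = 2) (M : ModuleCat.{u} R) (hfg : Module.Finite R M) :
    (∀ i : ℕ, IsCofinite a ((localCohomology a i).obj M)) ↔
      (∀ i : ℕ, Module.Finite R (extQuot a 0 ((localCohomology a i).obj M))) :=
  stmt2_general a hdim.le M fun n =>
    finite_extQuot_iff.2 (ModuleExt.finite (R ⧸ a) M n)
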